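/- arXiv:2604.06513 — 14 statements merged into one kernel-verified Lean document; each statement's English description precedes it below -/
import Mathlib

section
/- Let V be a nonempty finite type and let A be a V×V matrix over ℂ all of whose entries are 0 or 1, such that for all i, j it is not the case that both A i j = 1 and A j i = 1 (in particular every diagonal entry of A is 0, i.e. the associated digraph has no loops and no pair of oppositely oriented arcs). Suppose A is n-regular for some natural number n > 0, i.e. for every i the row sum ∑_j A i j equals n. Then A has at least one non-real eigenvalue: there exists λ in spectrum ℂ A with Im(λ) ≠ 0. -/
open scoped Classical

theorem digraph_regular_no_bidirected_has_nonreal_eigenvalue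
    {V : Type*} [Fintype V] [DecidableEq V] [Nonempty V]
    (A : Matrix V V ℂ)
    (h01 : ∀ i j, A i j = 0 ∨ A i j = 1)
    (hasym : ∀ i j, ¬ (A i j = 1 ∧ A j i = 1))
    (n : ℕ) (hn : 0 < n)
    (hreg : ∀ i, ∑ j, A i j = (n : ℂ)) :
    ∃ z ∈ spectrum ℂ A, z.im ≠ 0 := by
  by_contra! hreal
  have htr : (A ^ 2).trace = 0 := by
    rw [pow_two, Matrix.trace]
    refine Finset.sum_eq_zero fun i _ => ?_
    rw [Matrix.diag_apply, Matrix.mul_apply]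
    refine Finset.sum_eq_zero fun j _ => ?_
    rcases h01 i j with h | h
    · simp [h]
    · rcases h01 j i with h' | h'
      · simp [h']
      · exact absurd ⟨h, h'⟩ (hasym i j)
  rw [Matrix.trace_eq_sum_roots_charpoly] at htr
  have hspec : (n : ℂ) ∈ spectrum ℂ A := by
    rw [← Matrix.spectrum_toLin']
    apply Module.End.HasEigenvalue.mem_spectrum
    apply Module.End.hasEigenvalue_of_hasEigenvector (x := fun _ => 1)
    refine ⟨?_, fun h => ?_⟩
    · rw [Module.End.mem_eigenspace_iff]
      ext i
      simp [Matrix.mulVec, dotProduct, hreg]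
    · simpa using congrFun h (Classical.arbitrary V)
  have hroot : ∀ z ∈ (A ^ 2).charpoly.roots, 0 ≤ z.re := by
    intro z hz
    have h1 : z ∈ spectrum ℂ (A ^ 2) :=
      Matrix.mem_spectrum_of_isRoot_charpoly (Polynomial.isRoot_of_mem_roots hz)
    rw [spectrum.map_pow_of_pos A (by norm_num : 0 < 2)] at h1
    obtain ⟨w, hw, rfl⟩ := h1
    simp [pow_two, hreal w hw, mul_self_nonneg]
  have hn2 : ((n : ℂ) ^ 2) ∈ (A ^ 2).charpoly.roots := by
    rw [Polynomial.mem_roots (Matrix.charpoly_monic _).ne_zero,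
      ← Matrix.mem_spectrum_iff_isRoot_charpoly]
    exact spectrum.pow_mem_pow A 2 hspec
  have hsum : ((A ^ 2).charpoly.roots.map Complex.re).sum = 0 := by
    have := congrArg Complex.reAddGroupHom htr
    rw [map_multiset_sum] at this
    simpa using this
  have hle := Multiset.single_le_sum (s := (A ^ 2).charpoly.roots.map Complex.re)
    (by
      intro x hx
      obtain ⟨z, hz, rfl⟩ := Multiset.mem_map.1 hx
      exact hroot z hz) _ (Multiset.mem_map_of_mem Complex.re hn2)
  rw [hsum] at hle
  have : (0 : ℝ) < (n : ℝ) ^ 2 := by positivity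
  have h3 : (((n : ℂ) ^ 2)).re = (n : ℝ) ^ 2 := by
    rw [← Complex.ofReal_natCast, ← Complex.ofReal_pow, Complex.ofReal_re]
  linarith
end

section
/- Let G be a finite group and S a nonempty subset of G with S ∩ S⁻¹ = ∅. Let A be the G×G complex matrix with A x y = 1 if y * x⁻¹ ∈ S and A x y = 0 otherwise (the adjacency matrix of the Cayley digraph X(G,S)). Then A has at least one non-real eigenvalue: there exists λ in spectrum ℂ A with Im(λ) ≠ 0. -/
open scoped Classical
open scoped ComplexOrder

theorem cayley_digraph_antisymmetric_has_nonreal_eigenvalue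
    {G : Type*} [Group G] [Fintype G] [DecidableEq G]
    (S : Set G) (hS : S.Nonempty) (hanti : S ∩ S⁻¹ = ∅)
    (A : Matrix G G ℂ)
    (hA : ∀ x y : G, A x y = if y * x⁻¹ ∈ S then 1 else 0) :
    ∃ z ∈ spectrum ℂ A, z.im ≠ 0 := by
  by_contra! hreal
  have htr : (A ^ 2).trace = 0 := by
    rw [pow_two, Matrix.trace]
    refine Finset.sum_eq_zero fun x _ => ?_
    rw [Matrix.diag_apply, Matrix.mul_apply]
    refine Finset.sum_eq_zero fun y _ => ?_
    rw [hA, hA]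
    by_cases h1 : y * x⁻¹ ∈ S
    · have h2 : x * y⁻¹ ∉ S := by
        intro h2
        have : y * x⁻¹ ∈ S ∩ S⁻¹ := ⟨h1, by simpa using h2⟩
        rw [hanti] at this
        exact this
      rw [if_neg h2, mul_zero]
    · rw [if_neg h1, zero_mul]
  obtain ⟨c, hc⟩ : ∃ c : ℂ, c = ∑ s : G, if s ∈ S then (1 : ℂ) else 0 := ⟨_, rfl⟩
  have hc0 : c ≠ 0 := by
    obtain ⟨s, hs⟩ := hS
    rw [hc, Finset.sum_boole, Nat.cast_ne_zero]
    exact Finset.card_ne_zero_of_mem (a := s) (by simpa using hs)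
  have hmul : A.mulVec (fun _ => 1) = c • (fun _ => (1 : ℂ)) := by
    ext x
    simp only [Matrix.mulVec, dotProduct, mul_one, Pi.smul_apply, smul_eq_mul, hA, hc]
    exact Equiv.sum_comp (Equiv.mulRight x⁻¹) (fun s => if s ∈ S then (1 : ℂ) else 0)
  have hcs : c ∈ spectrum ℂ A := by
    rw [← Matrix.spectrum_toLin', ← Module.End.hasEigenvalue_iff_mem_spectrum]
    refine Module.End.hasEigenvalue_of_hasEigenvector (x := fun _ => 1) ⟨?_, ?_⟩
    · rw [Module.End.mem_eigenspace_iff, Matrix.toLin'_apply, hmul]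
    · intro h
      exact one_ne_zero (congrFun h (1 : G))
  have hc2 : c ^ 2 ∈ (A ^ 2).charpoly.roots := by
    rw [Polynomial.mem_roots (Matrix.charpoly_monic _).ne_zero,
      ← Matrix.mem_spectrum_iff_isRoot_charpoly]
    exact spectrum.pow_mem_pow A 2 hcs
  have hroots : ∀ r ∈ (A ^ 2).charpoly.roots, 0 ≤ r := by
    intro r hr
    rw [Polynomial.mem_roots (Matrix.charpoly_monic _).ne_zero,
      ← Matrix.mem_spectrum_iff_isRoot_charpoly, spectrum.map_pow_of_pos A two_pos] at hr
    obtain ⟨z, hz, rfl⟩ := hr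
    have hi := hreal z hz
    have : z = (z.re : ℂ) := Complex.ext rfl (by simpa using hi)
    show 0 ≤ z ^ 2
    rw [this]
    exact_mod_cast sq_nonneg z.re
  rw [Matrix.trace_eq_sum_roots_charpoly] at htr
  obtain ⟨t, ht⟩ := Multiset.exists_cons_of_mem hc2
  rw [ht, Multiset.sum_cons] at htr
  have h1 : 0 ≤ c ^ 2 := hroots _ hc2
  have h2 : 0 ≤ t.sum := Multiset.sum_nonneg fun r hr => hroots r (by rw [ht]; exact Multiset.mem_cons_of_mem hr)
  exact pow_ne_zero 2 hc0 ((add_eq_zero_iff_of_nonneg h1 h2).1 htr).1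
end

section
/- Let q = p^m be a prime power and k a positive divisor of q−1. Let A be the adjacency matrix of the generalized Paley graph Γ(k,q). Then every eigenvalue of A is real (i.e. for all λ ∈ spectrum ℂ A, Im(λ) = 0) if and only if −1 ∈ R_k, that is, if and only if Γ(k,q) is undirected. Equivalently, Γ(k,q) is directed if and only if A has at least one non-real eigenvalue. -/
open scoped Classical

open scoped Matrix.Norms.L2Operator in
lemma im_zero_of_herm {n : Type*} [Fintype n] [DecidableEq n] (A : Matrix n n ℂ)
    (h : A.IsHermitian) (z : ℂ) (hz : z ∈ spectrum ℂ A) : z.im = 0 :=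
  IsSelfAdjoint.im_eq_zero_of_mem_spectrum (A := Matrix n n ℂ) h hz

lemma symm_of_real {F : Type*} [Field F] [Fintype F] [DecidableEq F]
    (c : F → ℂ) (hc : ∀ x, (starRingEnd ℂ) (c x) = c x) (A : Matrix F F ℂ)
    (hA : ∀ x y, A x y = c (y - x)) (h : ∀ z ∈ spectrum ℂ A, z.im = 0) :
    A = A.transpose := by
  have e1 : ∀ ψ : AddChar F ℂ, A.mulVec ψ = (∑ r, c r * ψ r) • (ψ : F → ℂ) := by
    intro ψ
    ext x
    simp only [Matrix.mulVec, dotProduct, hA, Pi.smul_apply, smul_eq_mul, Finset.sum_mul]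
    rw [← Equiv.sum_comp (Equiv.addRight x)]
    refine Finset.sum_congr rfl fun r _ => ?_
    simp [AddChar.map_add_eq_mul, mul_assoc]
  have e2 : ∀ ψ : AddChar F ℂ, A.transpose.mulVec ψ
      = ((starRingEnd ℂ) (∑ r, c r * ψ r)) • (ψ : F → ℂ) := by
    intro ψ
    ext x
    simp only [Matrix.mulVec, dotProduct, hA, Pi.smul_apply, smul_eq_mul, Finset.sum_mul,
      Matrix.transpose_apply, map_sum]
    rw [← (Equiv.subLeft x).sum_comp]
    refine Finset.sum_congr rfl fun r _ => ?_
    simp only [Equiv.subLeft_apply, sub_sub_cancel, map_mul, hc]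
    rw [sub_eq_add_neg, AddChar.map_add_eq_mul, AddChar.map_neg_eq_conj]
    ring
  have key : Matrix.toLin' A = Matrix.toLin' A.transpose := by
    refine (AddChar.complexBasis F).ext fun ψ => ?_
    rw [AddChar.complexBasis_apply, Matrix.toLin'_apply, Matrix.toLin'_apply, e1, e2]
    congr 1
    have hm : (∑ r, c r * ψ r) ∈ spectrum ℂ A := by
      rw [← Matrix.spectrum_toLin']
      apply Module.End.HasEigenvalue.mem_spectrum
      refine Module.End.hasEigenvalue_of_hasEigenvector (x := (ψ : F → ℂ)) ⟨?_, ?_⟩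
      · rw [Module.End.mem_eigenspace_iff, Matrix.toLin'_apply, e1]
      · intro h0
        have := congrFun h0 0
        simp at this
    exact (Complex.conj_eq_iff_im.2 (h _ hm)).symm
  exact Matrix.toLin'.injective key

theorem gpGraph_real_spectrum_iff_undirected
    (p m k : ℕ) (hp : p.Prime) (hm : 1 ≤ m)
    (F : Type*) [Field F] [Fintype F] [DecidableEq F]
    (hF : Fintype.card F = p ^ m)
    (hk : 0 < k) (hkdvd : k ∣ p ^ m - 1)
    (A : Matrix F F ℂ)
    (hA : ∀ x y : F, A x y = if ∃ z : F, z ≠ 0 ∧ z ^ k = y - x then 1 else 0) :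
    (∀ z ∈ spectrum ℂ A, z.im = 0) ↔ (∃ z : F, z ≠ 0 ∧ z ^ k = -1) := by
  constructor
  · intro h
    have hs := symm_of_real (fun r => if ∃ z : F, z ≠ 0 ∧ z ^ k = r then 1 else 0)
      (by intro x; split_ifs <;> simp) A hA h
    have h1 := congrFun (congrFun hs 0) 1
    rw [Matrix.transpose_apply, hA, hA, if_pos ⟨1, one_ne_zero, by simp⟩] at h1
    by_contra hn
    rw [if_neg (by simpa using hn)] at h1
    exact one_ne_zero h1
  · rintro ⟨w, hw, hwk⟩
    apply im_zero_of_herm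
    have key : ∀ x y : F, (∃ z : F, z ≠ 0 ∧ z ^ k = y - x) → ∃ z : F, z ≠ 0 ∧ z ^ k = x - y := by
      rintro x y ⟨z, hz, e⟩
      exact ⟨w * z, mul_ne_zero hw hz, by rw [mul_pow, hwk, e]; ring⟩
    ext x y
    rw [Matrix.conjTranspose_apply, hA, hA]
    by_cases hh : ∃ z : F, z ≠ 0 ∧ z ^ k = y - x
    · rw [if_pos hh, if_pos (key _ _ hh)]; simp
    · rw [if_neg hh, if_neg (fun h' => hh (key _ _ h'))]; simp
end

section
/- Let p be an odd prime, q = p^m with m ≥ 1, and k a positive divisor of q−1 with v₂(k) = v₂(q−1) (so that Γ(k,q) is directed and k is even). Then: (1) R_k ∩ (−R_k) = ∅ and R_{k/2} = R_k ∪ (−R_k); (2) consequently, if A is the adjacency matrix of Γ(k,q), then the adjacency matrix of Γ(k/2,q) equals A + Aᵀ; and (3) spectrum ℂ (A + Aᵀ) = { (2·Re(λ) : ℂ) : λ ∈ spectrum ℂ A }, i.e. Spec(Γ(k/2,q)) = 2 Re(Spec(Γ(k,q))) as sets. -/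
open scoped Classical

open scoped Matrix.Norms.L2Operator in
theorem gp_spec_aux {n : Type*} [Fintype n] [DecidableEq n] (A : Matrix n n ℂ)
    (h : IsStarNormal A) :
    spectrum ℂ (A + star A) = (fun z : ℂ => ((2 * z.re : ℝ) : ℂ)) '' spectrum ℂ A := by
  have e : (fun z : ℂ => ((2 * z.re : ℝ) : ℂ)) = fun z : ℂ => z + star z := by
    funext z
    apply Complex.ext <;> simp <;> ring
  have h1 : cfc (fun z : ℂ => z + star z) A = A + star A := by
    rw [cfc_add (R := ℂ) A (fun z => z) (fun z => star z) (by fun_prop) (by fun_prop),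
      cfc_id' ℂ A, cfc_star_id (R := ℂ) (a := A)]
  rw [e, ← h1]
  exact cfc_map_spectrum (fun z : ℂ => z + star z) A h (by fun_prop)

theorem gpGraph_directed_symmetrization
    (p m k : ℕ) (hp : p.Prime) (hodd : Odd p) (hm : 1 ≤ m)
    (F : Type*) [Field F] [Fintype F] [DecidableEq F]
    (hF : Fintype.card F = p ^ m)
    (hk : 0 < k) (hkdvd : k ∣ p ^ m - 1)
    (hval : padicValNat 2 k = padicValNat 2 (p ^ m - 1))
    (Rk Rk2 : Set F)
    (hRk : Rk = {z : F | ∃ x : F, x ≠ 0 ∧ x ^ k = z})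
    (hRk2 : Rk2 = {z : F | ∃ x : F, x ≠ 0 ∧ x ^ (k / 2) = z})
    (A B : Matrix F F ℂ)
    (hA : ∀ x y : F, A x y = if y - x ∈ Rk then 1 else 0)
    (hB : ∀ x y : F, B x y = if y - x ∈ Rk2 then 1 else 0) :
    Rk ∩ (-Rk) = ∅ ∧
    Rk2 = Rk ∪ (-Rk) ∧
    B = A + A.transpose ∧
    spectrum ℂ B = (fun z : ℂ => ((2 * z.re : ℝ) : ℂ)) '' spectrum ℂ A := by
  
  classical
  have hp1 : 1 < p ^ m := Nat.one_lt_pow (by omega) hp.one_lt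
  have hpo : Odd (p ^ m) := hodd.pow
  have hq0 : p ^ m - 1 ≠ 0 := by omega
  have h2q : 2 ∣ p ^ m - 1 := by
    obtain ⟨a, ha⟩ := hpo
    exact ⟨a, by omega⟩
  have hv : 1 ≤ padicValNat 2 (p ^ m - 1) := one_le_padicValNat_of_dvd hq0 h2q
  obtain ⟨j, hj⟩ : 2 ∣ k := dvd_of_one_le_padicValNat (by omega)
  obtain ⟨n, hn⟩ := hkdvd
  have hn0 : n ≠ 0 := by
    rintro rfl
    simp at hn
    omega
  have hnodd : Odd n := by
    rw [hn, padicValNat.mul (by omega) hn0] at hval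
    by_contra hne
    have : 2 ∣ n := (Nat.not_odd_iff_even.mp hne).two_dvd
    have := one_le_padicValNat_of_dvd hn0 this
    omega
  have hj2 : k / 2 = j := by omega
  have hcard : Fintype.card F - 1 = 2 * (j * n) := by rw [hF, hn, hj]; ring
  have hfer : ∀ x : F, x ≠ 0 → x ^ (2 * (j * n)) = 1 := fun x hx => by
    rw [← hcard]; exact FiniteField.pow_card_sub_one_eq_one x hx
  have hchar : ringChar F ≠ 2 := by
    intro h
    have := FiniteField.even_card_of_char_two h
    rw [hF] at this
    rcases hpo with ⟨a, ha⟩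
    omega
  have hneg : (-1 : F) ≠ 1 := Ring.neg_one_ne_one_of_char_ne_two hchar
  have hhalf : Fintype.card F / 2 = j * n := by
    have := hF ▸ hp1
    rw [← hF] at hpo
    rcases hpo with ⟨a, ha⟩
    omega
  obtain ⟨w, hw0, hw⟩ : ∃ w : F, w ≠ 0 ∧ w ^ (j * n) = -1 := by
    obtain ⟨a, ha⟩ := FiniteField.exists_nonsquare hchar
    have ha0 : a ≠ 0 := by
      rintro rfl
      exact ha (by simp)
    refine ⟨a, ha0, ?_⟩
    have h1 := FiniteField.pow_dichotomy hchar ha0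
    have h2 := FiniteField.isSquare_iff hchar ha0
    rw [hhalf] at h1 h2
    tauto
  have hdis : ∀ z, z ∈ Rk → -z ∈ Rk → False := by
    intro z hz hz'
    rw [hRk] at hz hz'
    obtain ⟨x, hx, hxz⟩ := hz
    obtain ⟨y, hy, hyz⟩ := hz'
    have h1 : (x ^ k) ^ n = 1 := by
      rw [← pow_mul, hj, mul_assoc]; exact hfer x hx
    have h2 : (y ^ k) ^ n = 1 := by
      rw [← pow_mul, hj, mul_assoc]; exact hfer y hy
    rw [hyz, hnodd.neg_pow, ← hxz, h1] at h2
    exact hneg h2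
  have hun : ∀ z, z ∈ Rk2 ↔ z ∈ Rk ∨ -z ∈ Rk := by
    intro z
    rw [hRk, hRk2, hj2]
    constructor
    · rintro ⟨x, hx, rfl⟩
      obtain ⟨t, ht⟩ := hnodd
      have hs : (x ^ (j * n)) ^ 2 = 1 := by rw [← pow_mul, mul_comm]; exact hfer x hx
      have hk' : (x⁻¹ ^ t) ^ k * x ^ (j * n) = x ^ j := by
        rw [hj, ht, inv_pow, inv_pow, ← pow_mul, inv_mul_eq_iff_eq_mul₀ (pow_ne_zero _ hx), ← pow_add]
        congr 1; ring
      rcases eq_or_eq_neg_of_sq_eq_sq _ 1 (hs.trans (one_pow 2).symm) with h | h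
      · left
        exact ⟨x⁻¹ ^ t, pow_ne_zero _ (inv_ne_zero hx), by rw [← hk', h, mul_one]⟩
      · right
        exact ⟨x⁻¹ ^ t, pow_ne_zero _ (inv_ne_zero hx), by rw [← hk', h]; ring⟩
    · rintro (⟨x, hx, h⟩ | ⟨x, hx, h⟩)
      · exact ⟨x ^ 2, pow_ne_zero _ hx, by rw [← pow_mul, ← hj, h]⟩
      · refine ⟨x ^ 2 * w ^ n, mul_ne_zero (pow_ne_zero _ hx) (pow_ne_zero _ hw0), ?_⟩
        rw [mul_pow, ← pow_mul, ← pow_mul, ← hj, h, mul_comm n, hw]; ring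
  have hBA : B = A + A.transpose := by
    ext x y
    rw [Matrix.add_apply, Matrix.transpose_apply, hA, hA, hB]
    have h1 := hun (y - x)
    have h2 := hdis (y - x)
    rw [neg_sub] at h1 h2
    by_cases ha : y - x ∈ Rk <;> by_cases hb : x - y ∈ Rk <;>
      first | exact (h2 ha hb).elim | simp [h1, ha, hb]
  have hst : star A = A.transpose := by
    ext x y
    rw [Matrix.star_apply, Matrix.transpose_apply, hA]
    split_ifs <;> simp
  refine ⟨?_, ?_, hBA, ?_⟩
  · ext z
    simp only [Set.mem_inter_iff, Set.mem_neg, Set.mem_empty_iff_false, iff_false]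
    exact fun h => hdis z h.1 h.2
  · ext z
    simp only [Set.mem_union, Set.mem_neg]
    exact hun z
  · rw [hBA, ← hst]
    apply gp_spec_aux
    refine ⟨?_⟩
    rw [hst]
    change A.transpose * A = A * A.transpose
    ext x y
    simp only [Matrix.mul_apply, Matrix.transpose_apply]
    refine Fintype.sum_equiv (Equiv.subLeft (x + y)) _ _ fun z => ?_
    simp only [Equiv.subLeft_apply, hA]
    rw [show x + y - z - x = y - z by ring, show x + y - z - y = x - z by ring, mul_comm]
end

section
/- Let q = p^m with p prime and m ≥ 1, and let k be a positive divisor of q−1. Then Spec(Γ(k,q)) ⊆ ℤ (every eigenvalue of the adjacency matrix of Γ(k,q) is the image of an integer) if and only if for every prime ℓ the ℓ-adic valuation of k is at most the ℓ-adic valuation of (q−1)/(p−1), i.e. if and only if k divides (q−1)/(p−1). Moreover, the number of divisors k of q−1 for which Spec(Γ(k,q)) ⊆ ℤ equals the number of divisors of (q−1)/(p−1). -/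
open scoped Classical

namespace GPaux

open Finset

variable {F : Type*} [Field F] [Fintype F] [DecidableEq F]

lemma spectrum_sub (ψ : AddChar F ℂ) (hψ : ψ.IsPrimitive) (S : Finset F) (M : Matrix F F ℂ)
    (hM : ∀ x y, M x y = if y - x ∈ S then 1 else 0) (μ : ℂ) (hμ : μ ∈ spectrum ℂ M) :
    ∃ a : F, μ = ∑ s ∈ S, ψ (a * s) := by
  rw [← Matrix.spectrum_toLin', ← Module.End.hasEigenvalue_iff_mem_spectrum] at hμ
  obtain ⟨v, hv⟩ := hμ.exists_hasEigenvector
  have hv0 : v ≠ 0 := hv.2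
  have hev : M.mulVec v = μ • v := by
    have := hv.apply_eq_smul
    rwa [Matrix.toLin'_apply] at this
  have hMv : ∀ x, μ * v x = ∑ s ∈ S, v (x + s) := by
    intro x
    have := congrFun hev x
    simp only [Matrix.mulVec, dotProduct, hM, Pi.smul_apply, smul_eq_mul] at this
    rw [← this]
    rw [← Equiv.sum_comp (Equiv.addLeft x)]
    simp [Finset.sum_ite_mem]
  have hF : ∀ a, μ * ∑ x, v x * ψ (a * x) = (∑ s ∈ S, ψ (-a * s)) * ∑ x, v x * ψ (a * x) := by
    intro a
    calc μ * ∑ x, v x * ψ (a * x) = ∑ x, ∑ s ∈ S, v (x + s) * ψ (a * x) := by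
          rw [Finset.mul_sum]
          refine Finset.sum_congr rfl fun x _ => ?_
          rw [← mul_assoc, hMv, Finset.sum_mul]
      _ = ∑ s ∈ S, ∑ x, v (x + s) * ψ (a * x) := Finset.sum_comm
      _ = ∑ s ∈ S, ψ (-a * s) * ∑ x, v x * ψ (a * x) := by
          refine Finset.sum_congr rfl fun s _ => ?_
          rw [← Equiv.sum_comp (Equiv.addRight s) (fun x => v x * ψ (a * x)), Finset.mul_sum]
          refine Finset.sum_congr rfl fun x _ => ?_
          simp only [Equiv.coe_addRight]
          have : ψ (a * x) = ψ (-a * s) * ψ (a * (x + s)) := by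
            rw [← AddChar.map_add_eq_mul]; congr 1; ring
          rw [this]; ring
      _ = _ := by rw [Finset.sum_mul]
  have : ∃ a, ∑ x, v x * ψ (a * x) ≠ 0 := by
    by_contra! h
    apply hv0
    funext y
    have h1 : ∑ a, (∑ x, v x * ψ (a * x)) * ψ (a * (-y)) = (Fintype.card F : ℂ) * v y := by
      calc _ = ∑ a, ∑ x, v x * ψ (a * (x - y)) := by
            refine Finset.sum_congr rfl fun a _ => ?_
            rw [Finset.sum_mul]
            refine Finset.sum_congr rfl fun x _ => ?_
            rw [mul_assoc, ← AddChar.map_add_eq_mul]; congr 2; ring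
        _ = ∑ x, v x * ∑ a, ψ (a * (x - y)) := by
            rw [Finset.sum_comm]; simp only [Finset.mul_sum]
        _ = _ := by
            simp only [AddChar.sum_mulShift _ hψ, sub_eq_zero]
            simp [mul_comm]
    simp only [h, zero_mul, Finset.sum_const_zero] at h1
    have hc : (Fintype.card F : ℂ) ≠ 0 := by simp
    simpa [hc] using h1.symm
  obtain ⟨a, ha⟩ := this
  exact ⟨-a, mul_right_cancel₀ ha (hF a)⟩

lemma mem_spectrum (ψ : AddChar F ℂ) (S : Finset F) (M : Matrix F F ℂ)
    (hM : ∀ x y, M x y = if y - x ∈ S then 1 else 0) (a : F) :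
    ∑ s ∈ S, ψ (a * s) ∈ spectrum ℂ M := by
  rw [← Matrix.spectrum_toLin', ← Module.End.hasEigenvalue_iff_mem_spectrum]
  apply Module.End.hasEigenvalue_of_hasEigenvector (x := fun x => ψ (a * x))
  rw [Module.End.hasEigenvector_iff, Module.End.mem_eigenspace_iff]
  constructor
  · rw [Matrix.toLin'_apply]
    funext x
    simp only [Matrix.mulVec, dotProduct, hM, Pi.smul_apply, smul_eq_mul]
    rw [← Equiv.sum_comp (Equiv.addLeft x)]
    simp [Finset.sum_ite_mem, mul_add, AddChar.map_add_eq_mul, Finset.mul_sum, mul_comm]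
  · intro h
    have := congrFun h 0
    simp at this

lemma char_pow (p : ℕ) [CharP F p] (ψ : AddChar F ℂ) (x : F) : ψ x ^ p = 1 := by
  rw [← AddChar.map_nsmul_eq_pow, nsmul_eq_mul, CharP.cast_eq_zero, zero_mul,
    AddChar.map_zero_eq_one]

lemma int_of_inv (p : ℕ) (hp : p.Prime) [CharP F p] (ψ : AddChar F ℂ) (S : Finset F)
    (hS : ∀ n : ℕ, n.Coprime p → ∀ s ∈ S, (n : F) * s ∈ S) (a : F) :
    ∃ z : ℤ, ∑ s ∈ S, ψ (a * s) = z := by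
  have hint : IsIntegral ℤ (∑ s ∈ S, ψ (a * s)) := by
    refine IsIntegral.sum _ fun s _ => ?_
    refine IsIntegral.of_pow hp.pos ?_
    rw [char_pow p]; exact isIntegral_one
  rw [← IsIntegral.exists_int_iff_exists_rat hint]
  have h1 : ∀ n ∈ Finset.Ico 1 p, ∑ s ∈ S, ψ (a * s) = ∑ s ∈ S, ψ (a * s) ^ n := by
    intro n hn
    rw [Finset.mem_Ico] at hn
    have hcop : n.Coprime p := ((Nat.Prime.coprime_iff_not_dvd hp).2
      (Nat.not_dvd_of_pos_of_lt hn.1 hn.2)).symm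
    have hn0 : (n : F) ≠ 0 := by
      rw [Ne, CharP.cast_eq_zero_iff F p]
      intro h; exact absurd (Nat.le_of_dvd (by omega) h) (by omega)
    have himg : S.image (fun s => (n : F) * s) = S := by
      apply Finset.eq_of_subset_of_card_le
      · intro x hx
        obtain ⟨s, hs, rfl⟩ := Finset.mem_image.1 hx
        exact hS n hcop s hs
      · rw [Finset.card_image_of_injective _ (mul_right_injective₀ hn0)]
    conv_lhs => rw [← himg]
    rw [Finset.sum_image (fun x _ y _ h => mul_right_injective₀ hn0 h)]
    refine Finset.sum_congr rfl fun s _ => ?_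
    rw [← AddChar.map_nsmul_eq_pow, nsmul_eq_mul]; congr 1; ring
  have h2 : ((p : ℂ) - 1) * ∑ s ∈ S, ψ (a * s) = ∑ s ∈ S, ∑ n ∈ Finset.Ico 1 p, ψ (a * s) ^ n := by
    rw [Finset.sum_comm, ← Finset.sum_congr rfl h1]
    simp [Nat.cast_sub hp.one_le]
  have h3 : ∀ x : F, ∃ z : ℤ, ∑ n ∈ Finset.Ico 1 p, ψ x ^ n = z := by
    intro x
    by_cases h : ψ x = 1
    · exact ⟨((p - 1 : ℕ) : ℤ), by simp [h]⟩
    · refine ⟨-1, ?_⟩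
      have e := Finset.sum_range_eq_add_Ico (fun n => ψ x ^ n) hp.pos
      have g : ∑ n ∈ Finset.range p, ψ x ^ n = 0 := by
        rw [geom_sum_eq h, char_pow p]; simp
      rw [g] at e
      simp only [pow_zero] at e
      push_cast
      linear_combination -e
  choose f hf using h3
  have hp1 : ((p : ℂ) - 1) ≠ 0 := by
    rw [sub_ne_zero]; exact_mod_cast hp.one_lt.ne'
  refine ⟨(∑ s ∈ S, f (a * s) : ℤ) / ((p : ℚ) - 1), ?_⟩
  push_cast
  rw [eq_div_iff hp1, mul_comm, h2]
  exact Finset.sum_congr rfl fun s _ => hf _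

lemma inv_of_int (p : ℕ) (hp : p.Prime) [CharP F p] (ψ : AddChar F ℂ) (hψ : ψ.IsPrimitive)
    (S : Finset F) (h : ∀ a : F, ∃ z : ℤ, ∑ s ∈ S, ψ (a * s) = z) (n : ℕ) (hn : n.Coprime p)
    (h1 : (1 : F) ∈ S) : (n : F) ∈ S := by
  have : NeZero p := ⟨hp.ne_zero⟩
  have hζ := Complex.isPrimitiveRoot_exp p hp.ne_zero
  set ζ := Complex.exp (2 * Real.pi * Complex.I / p)
  have ht : ∀ x : F, ∃ i : ℕ, ζ ^ i = ψ x := fun x => by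
    obtain ⟨i, _, hi⟩ := hζ.eq_pow_of_pow_eq_one (char_pow p ψ x)
    exact ⟨i, hi⟩
  choose t ht using ht
  have key : ∀ a : F, ∑ s ∈ S, ψ (a * (n * s)) = ∑ s ∈ S, ψ (a * s) := by
    intro a
    obtain ⟨z, hz⟩ := h a
    let P : Polynomial ℤ := ∑ s ∈ S, Polynomial.X ^ (t (a * s)) - Polynomial.C z
    have hP : Polynomial.aeval ζ P = 0 := by
      simp [P, ht, hz]
    have hd := minpoly.isIntegrallyClosed_dvd (hζ.isIntegral hp.pos) hP
    rw [hζ.minpoly_eq_pow_coprime hn] at hd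
    have hP2 : Polynomial.aeval (ζ ^ n) P = 0 := by
      obtain ⟨Q, hQ⟩ := hd
      rw [hQ, map_mul, minpoly.aeval, zero_mul]
    rw [hz]
    simp only [P, map_sub, map_sum, map_pow, Polynomial.aeval_X, Polynomial.aeval_C,
      sub_eq_zero, ← pow_mul, mul_comm n] at hP2
    simp only [pow_mul, ht] at hP2
    rw [← Finset.sum_congr rfl (fun s _ => ?_)]
    · simpa using hP2
    · rw [← AddChar.map_nsmul_eq_pow, nsmul_eq_mul]; congr 1; ring
  have inv : ∀ (g : F → F), ∑ a, (∑ s ∈ S, ψ (a * g s)) * ψ (a * (-n)) =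
      ∑ s ∈ S, if g s = n then (Fintype.card F : ℂ) else 0 := by
    intro g
    calc _ = ∑ a, ∑ s ∈ S, ψ (a * (g s - n)) := by
          refine Finset.sum_congr rfl fun a _ => ?_
          rw [Finset.sum_mul]
          refine Finset.sum_congr rfl fun x _ => ?_
          rw [← AddChar.map_add_eq_mul]; congr 1; ring
      _ = ∑ s ∈ S, ∑ a, ψ (a * (g s - n)) := Finset.sum_comm
      _ = _ := by
          simp only [AddChar.sum_mulShift _ hψ, sub_eq_zero]
          simp
  have e1 := inv (fun s => n * s)
  have e2 := inv (fun s => s)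
  simp only [key] at e1
  rw [e2] at e1
  have hn0 : (n : F) ≠ 0 := by
    rw [Ne, CharP.cast_eq_zero_iff F p]
    intro h
    exact hp.one_lt.ne' (Nat.dvd_one.1 (hn ▸ Nat.dvd_gcd h dvd_rfl))
  by_contra hnS
  simp [hnS, mul_eq_left₀ hn0, h1] at e1
  have hc : (Fintype.card F : ℂ) ≠ 0 := by simp
  exact hc e1.symm

lemma core (p m k : ℕ) (hp : p.Prime) (hm : 1 ≤ m)
    (hF : Fintype.card F = p ^ m)
    (hkdvd : k ∣ p ^ m - 1) (M : Matrix F F ℂ)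
    (hM : ∀ x y : F, M x y = if ∃ z : F, z ≠ 0 ∧ z ^ k = y - x then 1 else 0) :
    spectrum ℂ M ⊆ Set.range ((↑) : ℤ → ℂ) ↔ k ∣ (p ^ m - 1) / (p - 1) := by
  have : Fact p.Prime := ⟨hp⟩
  have hq1 : 1 < p ^ m := Nat.one_lt_pow (by omega) hp.one_lt
  have hk : 0 < k := Nat.pos_of_dvd_of_pos hkdvd (by omega)
  have hp1 : 0 < p - 1 := by have := hp.one_lt; omega
  have hpd : p - 1 ∣ p ^ m - 1 := by simpa using Nat.sub_dvd_pow_sub_pow p 1 m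
  have : CharP F p := by
    obtain ⟨r, hr⟩ := CharP.exists F
    have := hr
    obtain ⟨n, hrp, hc⟩ := FiniteField.card F r
    have : r ∣ p ^ m := by rw [← hF, hc]; exact dvd_pow_self _ n.ne_zero
    have := (Nat.prime_dvd_prime_iff_eq hrp hp).1 (hrp.dvd_of_dvd_pow this)
    exact this ▸ hr
  let ψ := AddChar.FiniteField.primitiveChar_to_Complex F
  have hψ : ψ.IsPrimitive := AddChar.FiniteField.primitiveChar_to_Complex_isPrimitive F
  let S : Finset F := Finset.univ.filter fun x => ∃ z : F, z ≠ 0 ∧ z ^ k = x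
  have hMS : ∀ x y, M x y = if y - x ∈ S then 1 else 0 := by
    intro x y; rw [hM]; simp [S]
  have harith : k ∣ (p ^ m - 1) / (p - 1) ↔ p - 1 ∣ (p ^ m - 1) / k := by
    rw [Nat.dvd_div_iff_mul_dvd hpd, Nat.dvd_div_iff_mul_dvd hkdvd, mul_comm]
  rw [harith]
  constructor
  · intro hsp
    have hint : ∀ a : F, ∃ z : ℤ, ∑ s ∈ S, ψ (a * s) = z := fun a => by
      obtain ⟨z, hz⟩ := hsp (mem_spectrum ψ S M hMS a)
      exact ⟨z, hz.symm⟩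
    obtain ⟨g, hg⟩ := IsCyclic.exists_generator (α := (ZMod p)ˣ)
    have hog : orderOf g = p - 1 := by
      rw [orderOf_eq_card_of_forall_mem_zpowers hg, Nat.card_eq_fintype_card,
        ZMod.card_units_eq_totient, Nat.totient_prime hp]
    have hin := inv_of_int p hp ψ hψ S hint (g : ZMod p).val (ZMod.val_coe_unit_coprime g)
      (by simp only [S, Finset.mem_filter, Finset.mem_univ, true_and]; exact ⟨1, one_ne_zero, one_pow _⟩)
    simp only [S, Finset.mem_filter, Finset.mem_univ, true_and] at hin
    obtain ⟨z, hz0, hz⟩ := hin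
    have h1 : (((g : ZMod p).val : ℕ) : F) ^ ((p ^ m - 1) / k) = 1 := by
      rw [← hz, ← pow_mul, Nat.mul_div_cancel' hkdvd, ← hF]
      exact FiniteField.pow_card_sub_one_eq_one z hz0
    rw [← hog]
    apply orderOf_dvd_of_pow_eq_one
    ext
    push_cast
    rw [← ZMod.natCast_zmod_val (g : ZMod p)]
    have h2 : (((g : ZMod p).val ^ ((p ^ m - 1) / k) : ℕ) : F) = ((1 : ℕ) : F) := by
      push_cast; exact h1
    rw [CharP.natCast_eq_natCast F p] at h2
    have := (ZMod.natCast_eq_natCast_iff _ _ p).2 h2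
    push_cast at this
    simpa using this
  · intro hd μ hμ
    obtain ⟨a, rfl⟩ := spectrum_sub ψ hψ S M hMS μ hμ
    have hS : ∀ n : ℕ, n.Coprime p → ∀ s ∈ S, (n : F) * s ∈ S := by
      intro n hn s hs
      simp only [S, Finset.mem_filter, Finset.mem_univ, true_and] at hs ⊢
      obtain ⟨w, hw0, rfl⟩ := hs
      have hn0 : (n : F) ≠ 0 := by
        rw [Ne, CharP.cast_eq_zero_iff F p]
        intro h
        exact hp.one_lt.ne' (Nat.dvd_one.1 (hn ▸ Nat.dvd_gcd h dvd_rfl))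
      have hnp : (n : F) ^ (p - 1) = 1 := by
        have h2 := Nat.ModEq.pow_totient hn
        rw [Nat.totient_prime hp, ← CharP.natCast_eq_natCast F p] at h2
        exact_mod_cast h2
      have hnk : (n : F) ^ ((p ^ m - 1) / k) = 1 := by
        obtain ⟨c, hc⟩ := hd
        rw [hc, pow_mul, hnp, one_pow]
      obtain ⟨g, hg⟩ := IsCyclic.exists_generator (α := Fˣ)
      have hog : orderOf g = p ^ m - 1 := by
        rw [orderOf_eq_card_of_forall_mem_zpowers hg, Nat.card_eq_fintype_card,
          Fintype.card_units, hF]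
      obtain ⟨i, hi⟩ := (mem_powers_iff_mem_zpowers).2 (hg (Units.mk0 (n : F) hn0))
      have hi' : g ^ i = Units.mk0 (n : F) hn0 := hi
      have h3 : g ^ (i * ((p ^ m - 1) / k)) = 1 := by
        rw [pow_mul, hi']; ext; simpa using hnk
      have h4 := orderOf_dvd_of_pow_eq_one h3
      rw [hog] at h4
      have h5 : k ∣ i := by
        obtain ⟨d, hd'⟩ := hkdvd
        have hd0 : 0 < d := by
          rcases Nat.eq_zero_or_pos d with h | h
          · subst h; omega
          · exact h
        rw [hd', Nat.mul_div_cancel_left _ hk] at h4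
        exact Nat.dvd_of_mul_dvd_mul_right hd0 h4
      obtain ⟨j, rfl⟩ := h5
      refine ⟨((g ^ j : Fˣ) : F) * w, mul_ne_zero (Units.ne_zero _) hw0, ?_⟩
      rw [mul_pow, ← Units.val_pow_eq_pow_val, ← pow_mul, mul_comm j, hi']
      rfl
    obtain ⟨z, hz⟩ := int_of_inv p hp ψ S hS a
    exact ⟨z, hz.symm⟩

end GPaux

theorem gpGraph_integral_spectrum_iff
    (p m k : ℕ) (hp : p.Prime) (hm : 1 ≤ m)
    (F : Type*) [Field F] [Fintype F] [DecidableEq F]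
    (hF : Fintype.card F = p ^ m)
    (hk : 0 < k) (hkdvd : k ∣ p ^ m - 1)
    (A : ℕ → Matrix F F ℂ)
    (hA : ∀ j : ℕ, ∀ x y : F,
      A j x y = if ∃ z : F, z ≠ 0 ∧ z ^ j = y - x then 1 else 0) :
    (spectrum ℂ (A k) ⊆ Set.range ((↑) : ℤ → ℂ) ↔
      ∀ ℓ : ℕ, ℓ.Prime →
        padicValNat ℓ k ≤ padicValNat ℓ ((p ^ m - 1) / (p - 1))) ∧
    (spectrum ℂ (A k) ⊆ Set.range ((↑) : ℤ → ℂ) ↔ k ∣ (p ^ m - 1) / (p - 1)) ∧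
    ((p ^ m - 1).divisors.filter
        (fun j => spectrum ℂ (A j) ⊆ Set.range ((↑) : ℤ → ℂ))).card
      = ((p ^ m - 1) / (p - 1)).divisors.card := by
  have hq1 : 1 < p ^ m := Nat.one_lt_pow (by omega) hp.one_lt
  have hp1 : 0 < p - 1 := by have := hp.one_lt; omega
  have hpd : p - 1 ∣ p ^ m - 1 := by simpa using Nat.sub_dvd_pow_sub_pow p 1 m
  have hN : (p ^ m - 1) / (p - 1) ≠ 0 :=
    (Nat.div_pos (Nat.le_of_dvd (by omega) hpd) hp1).ne'
  have hc := fun j hj => GPaux.core p m j hp hm hF hj (A j) (hA j)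
  refine ⟨?_, hc k hkdvd, ?_⟩
  · rw [hc k hkdvd, ← Nat.factorization_prime_le_iff_dvd hk.ne' hN]
    refine forall_congr' fun l => forall_congr' fun hl => ?_
    rw [Nat.factorization_def _ hl, Nat.factorization_def _ hl]
  · congr 1
    ext j
    simp only [Finset.mem_filter, Nat.mem_divisors]
    constructor
    · rintro ⟨⟨h1, _⟩, h2⟩
      exact ⟨(hc j h1).1 h2, hN⟩
    · rintro ⟨h1, _⟩
      have h2 : j ∣ p ^ m - 1 := h1.trans (Nat.div_dvd_of_dvd hpd)
      exact ⟨⟨h2, by omega⟩, (hc j h2).2 h1⟩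
end

section
/- Let p be a prime and t ≥ 1. (a) If k is a positive divisor of p−1, then Spec(Γ(k, p^{kt})) ⊆ ℤ, where Γ(k, p^{kt}) is the generalized Paley graph over the field GaloisField p (k·t) with p^{kt} elements. (b) If k is a positive divisor of p+1, then Spec(Γ(k, p^{2t})) ⊆ ℤ, where Γ(k, p^{2t}) is the generalized Paley graph over the field GaloisField p (2t) with p^{2t} elements. -/
open scoped Classical

noncomputable instance (p n : ℕ) [Fact p.Prime] : Fintype (GaloisField p n) :=
  Fintype.ofFinite _

theorem gp_aux_pow {F : Type*} [Field F] [Fintype F] (k e : ℕ) (he : 0 < e)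
    (hN : Fintype.card F - 1 = k * e) (u : F) (hu : u ≠ 0) (h1 : u ^ e = 1) :
    ∃ z : F, z ≠ 0 ∧ z ^ k = u := by
  obtain ⟨g, hg⟩ := IsCyclic.exists_ofOrder_eq_natCard (α := Fˣ)
  have hcard : orderOf g = k * e := by
    rw [hg, Nat.card_eq_fintype_card, Fintype.card_units, hN]
  have hmem : Units.mk0 u hu ∈ Subgroup.zpowers g := by
    have : Subgroup.zpowers g = ⊤ := by
      apply Subgroup.eq_top_of_card_eq
      rw [Nat.card_zpowers, hg]
    rw [this]; trivial
  obtain ⟨j, hj⟩ := (isOfFinOrder_of_finite g).mem_powers_iff_mem_zpowers.mpr hmem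
  simp only at hj
  have h2 : g ^ (j * e) = 1 := by
    rw [pow_mul, hj]; ext; simpa using h1
  have h3 : k * e ∣ j * e := hcard ▸ orderOf_dvd_of_pow_eq_one h2
  obtain ⟨m, rfl⟩ := Nat.dvd_of_mul_dvd_mul_right he h3
  refine ⟨((g ^ m : Fˣ) : F), Units.ne_zero _, ?_⟩
  rw [← Units.val_pow_eq_pow_val, ← pow_mul, mul_comm m k, hj]; rfl

theorem gp_aux_fourier {G : Type*} [AddCommGroup G] [Fintype G] (v : G → ℂ) (hv : v ≠ 0) :
    ∃ ψ : AddChar G ℂ, ∑ x, ψ x * v x ≠ 0 := by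
  by_contra! h
  apply hv
  let L : (G → ℂ) →ₗ[ℂ] ℂ :=
    { toFun := fun f => ∑ x, f x * v x
      map_add' := by intro f g; simp [add_mul, Finset.sum_add_distrib]
      map_smul' := by intro c f; simp [Finset.mul_sum, mul_assoc] }
  have hL : L = 0 := by
    apply (AddChar.complexBasis G).ext
    intro ψ
    simpa [L] using h ψ
  funext x
  have := congrArg (fun M => M (Pi.single x 1)) hL
  simpa [L, Pi.single_apply] using this

theorem gp_aux_int {p : ℕ} [Fact p.Prime] {F : Type*} [Field F] [Fintype F] [Algebra (ZMod p) F]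
    (S : Finset F) (hS : ∀ c : ZMod p, c ≠ 0 → ∀ s ∈ S, c • s ∈ S) (ψ : AddChar F ℂ) :
    ∃ n : ℤ, (n : ℂ) = ∑ s ∈ S, ψ s := by
  have hp : 1 < p := (Fact.out : p.Prime).one_lt
  have hint : IsIntegral ℤ (∑ s ∈ S, ψ s) := by
    apply IsIntegral.sum
    intro s _
    apply IsIntegral.of_pow (n := p) (by lia)
    have : p • s = 0 := by
      have h := Nat.cast_smul_eq_nsmul (ZMod p) p s
      rw [← h]; simp
    rw [← AddChar.map_nsmul_eq_pow, this, AddChar.map_zero_eq_one]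
    exact isIntegral_one
  have hc : ∀ c : ZMod p, c ≠ 0 → ∑ s ∈ S, ψ (c • s) = ∑ s ∈ S, ψ s := by
    intro c hc
    refine Finset.sum_bij' (fun s _ => c • s) (fun s _ => c⁻¹ • s) (hS c hc)
      (hS _ (inv_ne_zero hc)) ?_ ?_ ?_
    · intro s _; simp [smul_smul, hc]
    · intro s _; simp [smul_smul, hc]
    · intro s _; rfl
  have hinner : ∀ s : F, ∃ n : ℤ, (n : ℂ) = ∑ c : ZMod p, ψ (c • s) := by
    intro s
    let χ : AddChar (ZMod p) ℂ :=
      { toFun := fun c => ψ (c • s)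
        map_zero_eq_one' := by simp
        map_add_eq_mul' := by intro a b; rw [add_smul, AddChar.map_add_eq_mul] }
    have := AddChar.sum_eq_ite χ
    refine ⟨if χ = 0 then p else 0, ?_⟩
    change _ = ∑ c, χ c
    rw [this]
    split_ifs <;> simp [ZMod.card]
  choose f hf using hinner
  have hsum : ∑ c : ZMod p, ∑ s ∈ S, ψ (c • s) = ((∑ s ∈ S, f s : ℤ) : ℂ) := by
    rw [Finset.sum_comm]; push_cast
    exact Finset.sum_congr rfl fun s _ => (hf s).symm
  rw [← Finset.add_sum_erase _ _ (Finset.mem_univ (0 : ZMod p)),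
    Finset.sum_congr rfl (fun c h => hc c (Finset.ne_of_mem_erase h))] at hsum
  simp only [zero_smul, AddChar.map_zero_eq_one, Finset.sum_const, Finset.card_erase_of_mem
    (Finset.mem_univ _), Finset.card_univ, ZMod.card, nsmul_eq_mul, mul_one] at hsum
  have hp1 : ((p - 1 : ℕ) : ℂ) ≠ 0 := by
    rw [Nat.cast_ne_zero]; lia
  have hrat : ∑ s ∈ S, ψ s = algebraMap ℚ ℂ (((∑ s ∈ S, f s : ℤ) - S.card : ℚ) / (p - 1 : ℕ)) := by
    rw [eq_ratCast]
    push_cast [-Nat.cast_sub, -Nat.cast_pred] at hsum ⊢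
    rw [eq_div_iff hp1, ← hsum]; ring
  rw [hrat, isIntegral_algebraMap_iff (algebraMap ℚ ℂ).injective,
    IsIntegrallyClosed.isIntegral_iff] at hint
  obtain ⟨n, hn⟩ := hint
  refine ⟨n, ?_⟩
  rw [hrat, ← hn]; simp

theorem gp_aux_main {p : ℕ} [Fact p.Prime] {F : Type*} [Field F] [Fintype F] [Algebra (ZMod p) F]
    (k : ℕ) (hk : 0 < k) (hd : (p - 1) * k ∣ Fintype.card F - 1)
    (A : Matrix F F ℂ)
    (hA : ∀ x y, A x y = if ∃ z, z ≠ 0 ∧ z ^ k = y - x then 1 else 0) :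
    spectrum ℂ A ⊆ Set.range ((↑) : ℤ → ℂ) := by
  intro μ hμ
  obtain ⟨e', he'⟩ := hd
  have hq : 1 < Fintype.card F := Fintype.one_lt_card
  have hN : Fintype.card F - 1 = k * ((p - 1) * e') := by rw [he']; ring
  have he : 0 < (p - 1) * e' := by
    rcases Nat.eq_zero_or_pos ((p - 1) * e') with h | h
    · rw [h] at hN; lia
    · exact h
  have hpow : ∀ c : ZMod p, c ≠ 0 → ∃ z : F, z ≠ 0 ∧ z ^ k = algebraMap (ZMod p) F c := by
    intro c hc
    apply gp_aux_pow k _ he hN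
    · simpa using hc
    · rw [← map_pow, pow_mul, ZMod.pow_card_sub_one_eq_one hc, one_pow, map_one]
  set S : Finset F := Finset.univ.filter (fun s => ∃ z, z ≠ 0 ∧ z ^ k = s) with hSdef
  have hS : ∀ c : ZMod p, c ≠ 0 → ∀ s ∈ S, c • s ∈ S := by
    intro c hc s hs
    simp only [hSdef, Finset.mem_filter, Finset.mem_univ, true_and] at hs ⊢
    obtain ⟨z, hz, rfl⟩ := hs
    obtain ⟨w, hw, hwc⟩ := hpow c hc
    exact ⟨w * z, mul_ne_zero hw hz, by rw [mul_pow, hwc, Algebra.smul_def]⟩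
  obtain ⟨v, hv, hv0⟩ : ∃ v : F → ℂ, v ≠ 0 ∧ A.mulVec v = μ • v := by
    rw [spectrum.mem_iff, Matrix.isUnit_iff_isUnit_det, isUnit_iff_ne_zero, not_not,
      ← Matrix.exists_mulVec_eq_zero_iff] at hμ
    obtain ⟨v, hv, h⟩ := hμ
    refine ⟨v, hv, ?_⟩
    rw [Matrix.sub_mulVec, sub_eq_zero] at h
    rw [← h, Algebra.algebraMap_eq_smul_one, Matrix.smul_mulVec, Matrix.one_mulVec]
  obtain ⟨ψ, hψ⟩ := gp_aux_fourier v hv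
  obtain ⟨n, hn⟩ := gp_aux_int S hS ψ⁻¹
  refine ⟨n, ?_⟩
  change (n : ℂ) = μ
  rw [hn]
  apply mul_right_cancel₀ hψ
  have h1 : ∀ x, μ * v x = ∑ y, (if y - x ∈ S then 1 else 0) * v y := by
    intro x
    have := congrFun hv0 x
    simp only [Matrix.mulVec, dotProduct, Pi.smul_apply, smul_eq_mul, hA] at this
    rw [← this]
    simp [hSdef]
  calc (∑ s ∈ S, ψ⁻¹ s) * ∑ x, ψ x * v x
      = ∑ y, ∑ s ∈ S, ψ (y - s) * v y := by
        rw [Finset.sum_mul_sum, Finset.sum_comm]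
        refine Finset.sum_congr rfl fun y _ => Finset.sum_congr rfl fun s _ => ?_
        rw [AddChar.inv_apply, sub_eq_add_neg, AddChar.map_add_eq_mul]; ring
    _ = ∑ y, ∑ x, ψ x * ((if y - x ∈ S then 1 else 0) * v y) := by
        refine Finset.sum_congr rfl fun y _ => ?_
        rw [← (Equiv.subLeft y).sum_comp]
        simp [Finset.sum_ite_mem]
    _ = μ * ∑ x, ψ x * v x := by
        rw [Finset.sum_comm, Finset.mul_sum]
        refine Finset.sum_congr rfl fun x _ => ?_
        rw [← Finset.mul_sum, ← h1]; ring

theorem gp_aux_dvd_a (p k t : ℕ) (hp : 1 < p) (h : k ∣ p - 1) :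
    (p - 1) * k ∣ p ^ (k * t) - 1 := by
  have hg := Nat.geomSum_eq (m := p) hp (k * t)
  have hd : (p - 1) ∣ p ^ (k * t) - 1 := by simpa using Nat.sub_dvd_pow_sub_pow p 1 (k * t)
  have hk : k ∣ ∑ i ∈ Finset.range (k * t), p ^ i := by
    have h1 : 1 ≡ p [MOD k] := (Nat.modEq_iff_dvd' hp.le).mpr h
    have : ∑ i ∈ Finset.range (k * t), p ^ i ≡ ∑ i ∈ Finset.range (k * t), 1 [MOD k] := by
      have key : ∀ n, ∑ i ∈ Finset.range n, p ^ i ≡ ∑ i ∈ Finset.range n, 1 [MOD k] := by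
        intro n
        induction n with
        | zero => rfl
        | succ n ih =>
          rw [Finset.sum_range_succ, Finset.sum_range_succ]
          exact ih.add (by simpa using (h1.symm.pow n))
      exact key _
    rw [(Nat.ModEq.dvd_iff this dvd_rfl)]
    simp
  have hpos : 0 < p - 1 := by lia
  rw [hg] at hk
  obtain ⟨m, hm⟩ := hk
  exact ⟨m, by rw [mul_assoc, ← hm, Nat.mul_div_cancel' hd]⟩

theorem gp_aux_dvd_b (p k t : ℕ) (h : k ∣ p + 1) :
    (p - 1) * k ∣ p ^ (2 * t) - 1 := by
  have h1 : (p - 1) * k ∣ p ^ 2 - 1 := by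
    have : p ^ 2 - 1 = (p - 1) * (p + 1) := by simpa [mul_comm] using Nat.sq_sub_sq p 1
    rw [this]; exact mul_dvd_mul_left _ h
  refine h1.trans ?_
  rw [pow_mul]
  simpa using Nat.sub_dvd_pow_sub_pow (p ^ 2) 1 t

theorem gpGraph_integral_families_basic
    (p : ℕ) [Fact p.Prime] (t : ℕ) (ht : 1 ≤ t) :
    (∀ k : ℕ, 0 < k → k ∣ p - 1 →
      ∀ A : Matrix (GaloisField p (k * t)) (GaloisField p (k * t)) ℂ,
        (∀ x y, A x y = if ∃ z, z ≠ 0 ∧ z ^ k = y - x then 1 else 0) →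
        spectrum ℂ A ⊆ Set.range ((↑) : ℤ → ℂ)) ∧
    (∀ k : ℕ, 0 < k → k ∣ p + 1 →
      ∀ A : Matrix (GaloisField p (2 * t)) (GaloisField p (2 * t)) ℂ,
        (∀ x y, A x y = if ∃ z, z ≠ 0 ∧ z ^ k = y - x then 1 else 0) →
        spectrum ℂ A ⊆ Set.range ((↑) : ℤ → ℂ)) := by
  have hp : 1 < p := (Fact.out : p.Prime).one_lt
  refine ⟨fun k hk hd A hA => ?_, fun k hk hd A hA => ?_⟩
  · refine gp_aux_main (p := p) k hk ?_ A hA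
    rw [← Nat.card_eq_fintype_card, GaloisField.card p (k * t) (by positivity)]
    exact gp_aux_dvd_a p k t hp hd
  · refine gp_aux_main (p := p) k hk ?_ A hA
    rw [← Nat.card_eq_fintype_card, GaloisField.card p (2 * t) (by positivity)]
    exact gp_aux_dvd_b p k t hd
end

section
/- Let p be a prime and k an odd positive integer with gcd(k, p(p−1)) = 1, and let φ denote Euler's totient function. Then for every t ≥ 1, k divides p^{φ(k)t} − 1 and Spec(Γ(k, p^{φ(k)t})) ⊆ ℤ, where Γ(k, p^{φ(k)t}) is the generalized Paley graph over the field GaloisField p (φ(k)·t) with p^{φ(k)t} elements. -/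
open scoped Classical

theorem gp_eta_int {F : Type*} [Field F] [Fintype F] (p : ℕ) [Fact p.Prime] [Algebra (ZMod p) F]
    (R : Finset F) (hR : ∀ c : ZMod p, c ≠ 0 → ∀ r ∈ R, c • r ∈ R) (ψ : AddChar F ℂ) :
    ∃ n : ℤ, (n : ℂ) = ∑ r ∈ R, ψ r := by
  have hp : p.Prime := Fact.out
  have hcharp : CharP F p := charP_of_injective_algebraMap (algebraMap (ZMod p) F).injective p
  set η := ∑ r ∈ R, ψ r with hη
  have hint : IsIntegral ℤ η := by
    refine IsIntegral.sum _ fun r _ => ?_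
    refine IsIntegral.of_pow hp.pos ?_
    rw [← AddChar.map_nsmul_eq_pow]
    have : p • r = 0 := by simp
    rw [this, AddChar.map_zero_eq_one]
    exact isIntegral_one
  have hc : ∀ c : ZMod p, c ≠ 0 → ∑ r ∈ R, ψ (c • r) = η := by
    intro c hc
    refine Finset.sum_bij (fun r _ => c • r) (fun r hr => hR c hc r hr) ?_ ?_ (fun _ _ => rfl)
    · intro a _ b _ h
      exact smul_right_injective F hc h
    · intro b hb
      exact ⟨c⁻¹ • b, hR _ (inv_ne_zero hc) b hb, smul_inv_smul₀ hc b⟩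
  have h1 : ∑ c : ZMod p, ∑ r ∈ R, ψ (c • r) = R.card + ((p : ℂ) - 1) * η := by
    rw [← Finset.add_sum_erase _ _ (Finset.mem_univ (0 : ZMod p))]
    rw [Finset.sum_congr rfl (fun c hc' => hc c (Finset.ne_of_mem_erase hc'))]
    rw [Finset.sum_const, Finset.card_erase_of_mem (Finset.mem_univ _)]
    simp [ZMod.card, Nat.cast_sub hp.one_le]
  have h2 : ∃ m : ℤ, (m : ℂ) = ∑ c : ZMod p, ∑ r ∈ R, ψ (c • r) := by
    rw [Finset.sum_comm]
    have : ∀ r : F, ∃ m : ℤ, (m : ℂ) = ∑ c : ZMod p, ψ (c • r) := by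
      intro r
      let χ : AddChar (ZMod p) ℂ :=
        ψ.compAddMonoidHom (LinearMap.toSpanSingleton (ZMod p) F r).toAddMonoidHom
      have := AddChar.sum_eq_ite χ
      have h' : ∑ c : ZMod p, ψ (c • r) = ∑ c, χ c := rfl
      rw [h', this]
      split_ifs
      · exact ⟨p, by simp [ZMod.card]⟩
      · exact ⟨0, by simp⟩
    choose m hm using this
    exact ⟨∑ r ∈ R, m r, by push_cast; exact Finset.sum_congr rfl fun r _ => hm r⟩
  obtain ⟨m, hm⟩ := h2
  have hp1 : (p : ℂ) - 1 ≠ 0 := by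
    rw [sub_ne_zero]; exact_mod_cast hp.one_lt.ne'
  have hq : algebraMap ℚ ℂ (((m : ℚ) - R.card) / ((p : ℚ) - 1)) = η := by
    simp only [eq_ratCast]
    push_cast
    rw [div_eq_iff hp1, hm, h1]; ring
  rw [← hq, isIntegral_algebraMap_iff (algebraMap ℚ ℂ).injective,
    IsIntegrallyClosed.isIntegral_iff] at hint
  obtain ⟨n, hn⟩ := hint
  refine ⟨n, ?_⟩
  rw [← hq, ← hn]; simp

theorem gp_spec {F : Type*} [Field F] [Fintype F] (p : ℕ) [Fact p.Prime] [Algebra (ZMod p) F]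
    (R : Finset F) (hR : ∀ c : ZMod p, c ≠ 0 → ∀ r ∈ R, c • r ∈ R)
    (A : Matrix F F ℂ) (hA : ∀ x y, A x y = if y - x ∈ R then 1 else 0) :
    spectrum ℂ A ⊆ Set.range ((↑) : ℤ → ℂ) := by
  intro l hl
  rw [← Matrix.spectrum_toLin', ← Module.End.hasEigenvalue_iff_mem_spectrum] at hl
  obtain ⟨v, hv⟩ := hl.exists_hasEigenvector
  have hv0 := hv.2
  have hev : A.mulVec v = l • v := by
    have := hv.apply_eq_smul
    rwa [Matrix.toLin'_apply] at this
  have key : ∀ ψ : AddChar F ℂ, l * ∑ y, ψ y * v y = (∑ r ∈ R, ψ⁻¹ r) * ∑ y, ψ y * v y := by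
    intro ψ
    have e1 : l * ∑ y, ψ y * v y = ∑ x, ψ x * (A.mulVec v) x := by
      rw [hev, Finset.mul_sum]
      refine Finset.sum_congr rfl fun y _ => ?_
      simp; ring
    rw [e1]
    simp only [Matrix.mulVec, dotProduct, Finset.mul_sum]
    rw [Finset.sum_comm]
    refine Finset.sum_congr rfl fun y _ => ?_
    rw [Finset.sum_mul]
    rw [← Equiv.sum_comp (Equiv.subLeft y)]
    simp only [hA, Equiv.subLeft_apply, sub_sub_cancel, ite_mul, one_mul, zero_mul, mul_ite,
      mul_zero]
    rw [Finset.sum_ite_mem, Finset.univ_inter]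
    refine Finset.sum_congr rfl fun r _ => ?_
    rw [AddChar.inv_apply, sub_eq_neg_add, AddChar.map_add_eq_mul]; ring
  have hex : ∃ ψ : AddChar F ℂ, ∑ y, ψ y * v y ≠ 0 := by
    by_contra! h
    apply hv0
    ext x
    have e : ∑ ψ : AddChar F ℂ, ψ (-x) * ∑ y, ψ y * v y = 0 :=
      Finset.sum_eq_zero fun ψ _ => by rw [h, mul_zero]
    simp only [Finset.mul_sum] at e
    rw [Finset.sum_comm] at e
    simp only [← mul_assoc, ← AddChar.map_add_eq_mul, ← Finset.sum_mul,
      AddChar.sum_apply_eq_ite, neg_add_eq_zero, ite_mul, zero_mul, Finset.sum_ite_eq,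
      Finset.mem_univ, if_true] at e
    simpa using e
  obtain ⟨ψ, hψ⟩ := hex
  obtain ⟨n, hn⟩ := gp_eta_int p R hR ψ⁻¹
  exact ⟨n, by rw [hn]; exact (mul_right_cancel₀ hψ (key ψ)).symm⟩

theorem gpGraph_integral_family_totient
    (p : ℕ) [Fact p.Prime] (k : ℕ) (hk : 0 < k) (hodd : Odd k)
    (hgcd : Nat.gcd k (p * (p - 1)) = 1) :
    ∀ t : ℕ, 1 ≤ t →
      (k ∣ p ^ (Nat.totient k * t) - 1) ∧
      ∀ A : Matrix (GaloisField p (Nat.totient k * t))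
          (GaloisField p (Nat.totient k * t)) ℂ,
        (∀ x y, A x y = if ∃ z, z ≠ 0 ∧ z ^ k = y - x then 1 else 0) →
        spectrum ℂ A ⊆ Set.range ((↑) : ℤ → ℂ) := by
  intro t _
  have hp : p.Prime := Fact.out
  have hkp : Nat.Coprime k p := Nat.Coprime.coprime_mul_right_right hgcd
  have hkp1 : Nat.Coprime k (p - 1) := Nat.Coprime.coprime_mul_left_right hgcd
  refine ⟨?_, ?_⟩
  · have h := (Nat.ModEq.pow_totient hkp.symm).pow t
    rw [← pow_mul, one_pow] at h
    exact (Nat.modEq_iff_dvd' (Nat.one_le_pow _ _ hp.pos)).1 h.symm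
  · intro A hA
    refine gp_spec p (Finset.univ.filter fun r => ∃ z, z ≠ 0 ∧ z ^ k = r) ?_ A ?_
    · intro c hc r hr
      simp only [Finset.mem_filter, Finset.mem_univ, true_and] at hr ⊢
      obtain ⟨z, hz, rfl⟩ := hr
      have hcop : (Nat.card (ZMod p)ˣ).Coprime k := by
        rw [Nat.card_eq_fintype_card, ZMod.card_units]
        exact hkp1.symm
      obtain ⟨d, hd⟩ := (powCoprime hcop).surjective (Units.mk0 c hc)
      have hd' : (d : ZMod p) ^ k = c := by
        have := congrArg Units.val hd
        simpa using this
      refine ⟨(d : ZMod p) • z, smul_ne_zero d.ne_zero hz, ?_⟩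
      rw [smul_pow, hd']
    · intro x y
      rw [hA]
      simp
end

section
/- Let q = p^m with p prime and m ≥ 1, and let k be a positive divisor of q−1. If Spec(Γ(k,q)) ⊆ ℤ, where Γ(k,q) is the generalized Paley graph over GaloisField p m, then for every a ≥ 1 one has Spec(Γ(k·(q^a−1)/(q−1), q^a)) ⊆ ℤ, where Γ(k·(q^a−1)/(q−1), q^a) is the generalized Paley graph over GaloisField p (m·a). -/
open scoped Classical

theorem mem_spectrum_iff_vec {n : Type*} [Fintype n] [DecidableEq n] (M : Matrix n n ℂ) (μ : ℂ) :
    μ ∈ spectrum ℂ M ↔ ∃ v : n → ℂ, v ≠ 0 ∧ M.mulVec v = μ • v := by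
  rw [← Matrix.spectrum_toLin', ← Module.End.hasEigenvalue_iff_mem_spectrum]
  constructor
  · intro h
    obtain ⟨v, hv⟩ := h.exists_hasEigenvector
    exact ⟨v, hv.2, by simpa using hv.apply_eq_smul⟩
  · rintro ⟨v, hv0, hv⟩
    exact Module.End.hasEigenvalue_of_hasEigenvector
      (x := v) ⟨Module.End.mem_eigenspace_iff.mpr (by simpa using hv), hv0⟩

theorem spectrum_sub_aux {K L : Type*} [Field K] [Field L] [Fintype K] [Fintype L]
    [DecidableEq K] [DecidableEq L] (f : K →+* L) (S : K → Prop) (T : L → Prop)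
    (hT : ∀ x, T x ↔ ∃ t, S t ∧ f t = x)
    (A : Matrix K K ℂ) (hA : ∀ x y, A x y = if S (y - x) then 1 else 0)
    (B : Matrix L L ℂ) (hB : ∀ x y, B x y = if T (y - x) then 1 else 0) :
    spectrum ℂ B ⊆ spectrum ℂ A := by
  intro μ hμ
  rw [mem_spectrum_iff_vec] at hμ ⊢
  obtain ⟨v, hv0, hv⟩ := hμ
  obtain ⟨x0, hx0⟩ := Function.ne_iff.mp hv0
  refine ⟨fun t => v (x0 + f t), fun h => hx0 (by simpa using congrFun h 0), ?_⟩
  ext s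
  have h := congrFun hv (x0 + f s)
  simp only [Matrix.mulVec, dotProduct, Pi.smul_apply] at h ⊢
  rw [← h]
  have hinj : Function.Injective (fun t => x0 + f t) := fun a b hab =>
    f.injective (add_left_cancel hab)
  refine Finset.sum_of_injOn (fun t => x0 + f t) hinj.injOn (by simp) ?_ ?_
  · intro y _ hy
    rw [hB, if_neg, zero_mul]
    rw [hT]
    rintro ⟨t, -, ht⟩
    refine hy ⟨t + s, by simp, ?_⟩
    simp only [map_add, ht]; ring
  · intro t _
    rw [hA, hB]
    have : S (t - s) ↔ T (x0 + f t - (x0 + f s)) := by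
      rw [hT]
      have e : x0 + f t - (x0 + f s) = f (t - s) := by rw [map_sub]; ring
      rw [e]
      constructor
      · intro h; exact ⟨_, h, rfl⟩
      · rintro ⟨u, hu, hu'⟩
        rwa [← f.injective hu']
    simp only [this]


theorem gpGraph_integral_towers
    (p m k : ℕ) [Fact p.Prime] (hm : 1 ≤ m) (hk : 0 < k)
    (hkdvd : k ∣ p ^ m - 1)
    (A : Matrix (GaloisField p m) (GaloisField p m) ℂ)
    (hA : ∀ x y, A x y = if ∃ z, z ≠ 0 ∧ z ^ k = y - x then 1 else 0)
    (hspec : spectrum ℂ A ⊆ Set.range ((↑) : ℤ → ℂ)) :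
    ∀ a : ℕ, 1 ≤ a →
      ∀ B : Matrix (GaloisField p (m * a)) (GaloisField p (m * a)) ℂ,
        (∀ x y, B x y =
          if ∃ z, z ≠ 0 ∧ z ^ (k * (((p ^ m) ^ a - 1) / (p ^ m - 1))) = y - x
          then 1 else 0) →
        spectrum ℂ B ⊆ Set.range ((↑) : ℤ → ℂ) := by
  intro a ha B hB
  refine subset_trans ?_ hspec
  have hm0 : m ≠ 0 := by omega
  have hma : m * a ≠ 0 := by positivity
  obtain ⟨g⟩ : Nonempty (GaloisField p m →ₐ[ZMod p] GaloisField p (m * a)) := by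
    apply FiniteField.nonempty_algHom_of_finrank_dvd
    rw [GaloisField.finrank p hm0, GaloisField.finrank p hma]
    exact dvd_mul_right m a
  let : Algebra (GaloisField p m) (GaloisField p (m * a)) := g.toRingHom.toAlgebra
  have hN : ∀ z : GaloisField p (m * a),
      algebraMap (GaloisField p m) (GaloisField p (m * a)) (Algebra.norm (GaloisField p m) z)
        = z ^ (((p ^ m) ^ a - 1) / (p ^ m - 1)) := by
    intro z
    rw [FiniteField.algebraMap_norm_eq_pow, GaloisField.card p m hm0,
      GaloisField.card p (m * a) hma, pow_mul]
  refine spectrum_sub_aux (algebraMap (GaloisField p m) (GaloisField p (m * a)))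
    (fun t => ∃ z, z ≠ 0 ∧ z ^ k = t)
    (fun t => ∃ z, z ≠ 0 ∧ z ^ (k * (((p ^ m) ^ a - 1) / (p ^ m - 1))) = t) ?_ A ?_ B ?_
  · intro x
    constructor
    · rintro ⟨z, hz, rfl⟩
      refine ⟨(Algebra.norm (GaloisField p m) z) ^ k, ⟨_, ?_, rfl⟩, ?_⟩
      · exact Algebra.norm_ne_zero_iff.mpr hz
      · rw [map_pow, hN, mul_comm k, pow_mul z _ k]
    · rintro ⟨_, ⟨w, hw, rfl⟩, rfl⟩
      obtain ⟨z, rfl⟩ := FiniteField.norm_surjective (GaloisField p m) (GaloisField p (m * a)) w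
      refine ⟨z, Algebra.norm_ne_zero_iff.mp hw, ?_⟩
      rw [map_pow, hN, mul_comm k, pow_mul z _ k]
  · intro x y; rw [hA]; congr
  · intro x y; rw [hB]; congr
end

section
/- Let q = p^m with p prime and m ≥ 1, and let k be a positive divisor of q−1. Suppose there exists a natural number d with d ∣ m, d > 1, such that (k : ℤ) divides Φ_d(p), the value at p of the d-th cyclotomic polynomial over ℤ. Then Spec(Γ(k,q)) ⊆ ℤ. -/
open scoped Classical

lemma aux_dvd (p m k d : ℕ) (hp : 1 < p) (hm : 1 ≤ m) (hdm : d ∣ m) (hd : 1 < d)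
    (hdvd : (k : ℤ) ∣ (Polynomial.cyclotomic d ℤ).eval (p : ℤ)) :
    ∃ t, p ^ m - 1 = (p - 1) * (k * t) := by
  have h1 : (k : ℤ) ∣ ((∑ i ∈ Finset.range m, p ^ i : ℕ) : ℤ) := by
    have h := Polynomial.prod_cyclotomic_eq_geom_sum (n := m) (by omega) ℤ
    have h2 : Polynomial.cyclotomic d ℤ ∣ ∑ i ∈ Finset.range m, (Polynomial.X : Polynomial ℤ) ^ i := by
      rw [← h]
      apply Finset.dvd_prod_of_mem
      simp [hdm]
      omega
    have h3 := Polynomial.eval_dvd (x := (p : ℤ)) h2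
    simp only [Polynomial.eval_finset_sum, Polynomial.eval_pow, Polynomial.eval_X] at h3
    push_cast
    exact hdvd.trans h3
  obtain ⟨t, ht⟩ := Int.natCast_dvd_natCast.mp h1
  refine ⟨t, ?_⟩
  rw [← ht, mul_comm, Nat.geomSum_eq hp]
  exact (Nat.div_mul_cancel (by simpa using Nat.sub_dvd_pow_sub_pow p 1 m)).symm

lemma aux_pow {F : Type*} [Field F] [Fintype F] (p k t : ℕ) (hp : 1 < p)
    (hc : Fintype.card F - 1 = (p - 1) * (k * t)) (c : F) (hc0 : c ≠ 0) (h : c ^ (p - 1) = 1) :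
    ∃ z, z ≠ 0 ∧ z ^ k = c := by
  obtain ⟨g, hg⟩ := IsCyclic.exists_generator (α := Fˣ)
  obtain ⟨j, hj⟩ := (mem_powers_iff_mem_zpowers.mpr (hg (Units.mk0 c hc0)))
  simp only at hj
  have ho : orderOf g = (p - 1) * (k * t) := by
    rw [orderOf_eq_card_of_forall_mem_zpowers hg, Nat.card_eq_fintype_card, Fintype.card_units, hc]
  have h1 : g ^ (j * (p - 1)) = 1 := by
    rw [pow_mul, hj]
    ext
    simpa using h
  have h2 := orderOf_dvd_of_pow_eq_one h1
  rw [ho, mul_comm j] at h2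
  have h3 := Nat.dvd_of_mul_dvd_mul_left (by omega) h2
  obtain ⟨r, hr⟩ := (Dvd.intro _ rfl : k ∣ k * t).trans h3
  refine ⟨((g ^ r : Fˣ) : F), Units.ne_zero _, ?_⟩
  rw [← Units.val_pow_eq_pow_val, ← pow_mul, mul_comm, ← hr, hj]
  rfl

lemma aux_int {F : Type*} [Field F] [Fintype F] (p : ℕ) [Fact p.Prime] [CharP F p] [Algebra (ZMod p) F]
    (R : Finset F) (hR : ∀ c : ZMod p, c ≠ 0 → ∀ s, algebraMap (ZMod p) F c * s ∈ R ↔ s ∈ R)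
    (ψ : AddChar F ℂ) : ∃ n : ℤ, (n : ℂ) = ∑ s ∈ R, ψ s := by
  have hp1 : 1 < p := (Fact.out : p.Prime).one_lt
  have hint : IsIntegral ℤ (∑ s ∈ R, ψ s) := by
    apply IsIntegral.sum
    intro s _
    apply IsIntegral.of_pow (n := p) (by omega)
    rw [← AddChar.map_nsmul_eq_pow]
    simp [isIntegral_one]
  have hinv : ∀ c : ZMod p, c ≠ 0 → ∑ s ∈ R, ψ (algebraMap (ZMod p) F c * s) = ∑ s ∈ R, ψ s := by
    intro c hc
    have hc' : algebraMap (ZMod p) F c ≠ 0 := by simpa using hc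
    refine Finset.sum_bij (fun s _ => algebraMap (ZMod p) F c * s) ?_ ?_ ?_ ?_
    · intro s hs
      exact (hR c hc s).mpr hs
    · intro a _ b _ h
      exact mul_left_cancel₀ hc' h
    · intro b hb
      refine ⟨(algebraMap (ZMod p) F c)⁻¹ * b, ?_, ?_⟩
      · rw [← hR c hc, mul_inv_cancel_left₀ hc']
        exact hb
      · rw [mul_inv_cancel_left₀ hc']
    · intros; rfl
  have hsum : ∀ s : F, ∃ n : ℕ, ∑ c : ZMod p, ψ (algebraMap (ZMod p) F c * s) = (n : ℂ) := by
    intro s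
    let χ : AddChar (ZMod p) ℂ := ψ.compAddMonoidHom
      ((AddMonoidHom.mulRight s).comp (algebraMap (ZMod p) F).toAddMonoidHom)
    have h := AddChar.sum_eq_ite χ
    refine ⟨if χ = 0 then Fintype.card (ZMod p) else 0, ?_⟩
    push_cast
    rw [← h]
    rfl
  choose N hN using hsum
  have h1 : ∑ c : ZMod p, ∑ s ∈ R, ψ (algebraMap (ZMod p) F c * s) = ((∑ s ∈ R, N s : ℕ) : ℂ) := by
    rw [Finset.sum_comm]
    push_cast
    exact Finset.sum_congr rfl fun s _ => hN s
  rw [← Finset.add_sum_erase _ _ (Finset.mem_univ (0 : ZMod p)),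
    Finset.sum_congr rfl (fun c hc => hinv c (Finset.ne_of_mem_erase hc))] at h1
  simp only [map_zero, zero_mul, AddChar.map_zero_eq_one, Finset.sum_const, nsmul_eq_mul, mul_one,
    Finset.card_erase_of_mem (Finset.mem_univ _), Finset.card_univ, ZMod.card] at h1
  have hp2 : ((p - 1 : ℕ) : ℂ) ≠ 0 := by
    exact_mod_cast (by omega : p - 1 ≠ 0)
  have hq : ∑ s ∈ R, ψ s = algebraMap ℚ ℂ ((((∑ s ∈ R, N s : ℕ) : ℚ) - R.card) / ((p - 1 : ℕ) : ℚ)) := by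
    rw [map_div₀, map_sub, map_natCast, map_natCast, map_natCast, ← h1]
    field_simp
    ring
  rw [hq] at hint ⊢
  rw [isIntegral_algebraMap_iff (algebraMap ℚ ℂ).injective] at hint
  obtain ⟨n, hn⟩ := IsIntegrallyClosed.isIntegral_iff.mp hint
  refine ⟨n, ?_⟩
  rw [← hn]
  simp

theorem gpGraph_integral_of_dvd_cyclotomic
    (p m k : ℕ) [Fact p.Prime] (hm : 1 ≤ m) (hk : 0 < k)
    (hkdvd : k ∣ p ^ m - 1)
    (d : ℕ) (hdm : d ∣ m) (hd : 1 < d)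
    (hdvd : (k : ℤ) ∣ (Polynomial.cyclotomic d ℤ).eval (p : ℤ))
    (A : Matrix (GaloisField p m) (GaloisField p m) ℂ)
    (hA : ∀ x y, A x y = if ∃ z, z ≠ 0 ∧ z ^ k = y - x then 1 else 0) :
    spectrum ℂ A ⊆ Set.range ((↑) : ℤ → ℂ) := by
  have hp1 : 1 < p := (Fact.out : p.Prime).one_lt
  obtain ⟨t, ht⟩ := aux_dvd p m k d hp1 hm hdm hd hdvd
  have hcard : Fintype.card (GaloisField p m) = p ^ m := by
    rw [← Nat.card_eq_fintype_card, GaloisField.card p m (by omega)]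
  have hpow : ∀ c : ZMod p, c ≠ 0 → ∃ z : GaloisField p m, z ≠ 0 ∧
      z ^ k = algebraMap (ZMod p) _ c := by
    intro c hc
    apply aux_pow p k t hp1 (by rw [hcard, ht]) _ (by simpa using hc)
    rw [← map_pow, ZMod.pow_card_sub_one_eq_one hc, map_one]
  let R : Finset (GaloisField p m) := Finset.univ.filter fun s => ∃ z, z ≠ 0 ∧ z ^ k = s
  have hmem : ∀ s, s ∈ R ↔ ∃ z, z ≠ 0 ∧ z ^ k = s := fun s => by simp [R]
  have hR : ∀ c : ZMod p, c ≠ 0 → ∀ s, algebraMap (ZMod p) (GaloisField p m) c * s ∈ R ↔ s ∈ R := by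
    intro c hc s
    obtain ⟨w, hw, hwc⟩ := hpow c hc
    rw [hmem, hmem]
    constructor
    · rintro ⟨z, hz, h⟩
      refine ⟨w⁻¹ * z, mul_ne_zero (inv_ne_zero hw) hz, ?_⟩
      rw [mul_pow, h, ← hwc, inv_pow, inv_mul_cancel_left₀ (pow_ne_zero _ hw)]
    · rintro ⟨z, hz, h⟩
      exact ⟨w * z, mul_ne_zero hw hz, by rw [mul_pow, h, hwc]⟩
  intro μ hμ
  rw [← Matrix.spectrum_toLin', ← Module.End.hasEigenvalue_iff_mem_spectrum] at hμ
  obtain ⟨v, hv⟩ := hμ.exists_hasEigenvector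
  have hv0 := hv.2
  have hAv : A.mulVec v = μ • v := by simpa using hv.apply_eq_smul
  -- a character with nonzero Fourier coefficient
  obtain ⟨ψ, hψ⟩ : ∃ ψ : AddChar (GaloisField p m) ℂ, ∑ x, ψ x * v x ≠ 0 := by
    by_contra! hcon
    apply hv0
    let L : (GaloisField p m → ℂ) →ₗ[ℂ] ℂ := 
      { toFun := fun f => ∑ x, f x * v x
        map_add' := fun f g => by simp [add_mul, Finset.sum_add_distrib]
        map_smul' := fun c f => by simp [Finset.mul_sum, mul_assoc] }
    have hL : L = 0 := by
      apply (AddChar.complexBasis (GaloisField p m)).ext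
      intro ψ
      simpa [L] using hcon ψ
    funext y
    have := LinearMap.congr_fun hL (Pi.single y 1)
    simpa [L, Pi.single_apply] using this
  obtain ⟨n, hn⟩ := aux_int p R hR ψ⁻¹
  refine ⟨n, ?_⟩
  rw [hn]
  have h1 : ∑ x, ψ x * (A.mulVec v) x = (∑ s ∈ R, ψ⁻¹ s) * ∑ x, ψ x * v x := by
    simp only [Matrix.mulVec, dotProduct, Finset.mul_sum]
    rw [Finset.sum_comm]
    refine Finset.sum_congr rfl fun y _ => ?_
    rw [Finset.sum_mul, ← Finset.sum_filter_add_sum_filter_not Finset.univ (fun x => y - x ∈ R)]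
    have hz : ∑ x with ¬ (y - x ∈ R), ψ x * (A x y * v y) = 0 := by
      apply Finset.sum_eq_zero
      intro x hx
      rw [Finset.mem_filter, hmem] at hx
      rw [hA, if_neg hx.2]
      simp
    rw [hz, add_zero]
    refine Finset.sum_bij' (fun x _ => y - x) (fun s _ => y - s) ?_ ?_ ?_ ?_ ?_
    · intro x hx; simpa using hx
    · intro s hs; simpa using hs
    · intro x hx; simp
    · intro x hx; simp
    · intro x hx
      rw [Finset.mem_filter, hmem] at hx
      rw [hA, if_pos hx.2, AddChar.inv_apply, one_mul, ← mul_assoc, ← AddChar.map_add_eq_mul]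
      congr 2
      ring
  rw [hAv] at h1
  have h2 : ∑ x, ψ x * (μ • v) x = μ * ∑ x, ψ x * v x := by
    rw [Finset.mul_sum]
    refine Finset.sum_congr rfl fun x _ => ?_
    simp only [Pi.smul_apply, smul_eq_mul]
    ring
  rw [h2] at h1
  exact (mul_right_cancel₀ hψ h1).symm
end

section
/- Let p be a prime, d > 1, and set q = p^d and K = Φ_d(p) (a positive integer). Then for all a, t ≥ 1, the generalized Paley graph Γ(K·(q^{ta}−1)/(q^t−1), q^{at}) over the field GaloisField p (d·a·t) with q^{at} = p^{dat} elements has integral spectrum: Spec(Γ(K·(q^{ta}−1)/(q^t−1), q^{at})) ⊆ ℤ. -/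
open scoped Classical

lemma gp_dvd (p d K : ℕ) (hp : 2 ≤ p) (hd : 1 < d)
    (hK : (K : ℤ) = (Polynomial.cyclotomic d ℤ).eval (p : ℤ)) : K * (p - 1) ∣ p ^ d - 1 := by
  have h := Polynomial.prod_cyclotomic_eq_X_pow_sub_one (n := d) (by omega) ℤ
  have h1 : ({d, 1} : Finset ℕ) ⊆ d.divisors := by
    intro x hx
    simp only [Finset.mem_insert, Finset.mem_singleton] at hx
    rcases hx with rfl | rfl <;> simp <;> omega
  have h2 := Finset.prod_dvd_prod_of_subset _ _ (fun i => Polynomial.cyclotomic i ℤ) h1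
  rw [h, Finset.prod_pair (by omega)] at h2
  have h3 := Polynomial.eval_dvd (x := (p : ℤ)) h2
  simp only [Polynomial.eval_mul, Polynomial.cyclotomic_one, Polynomial.eval_sub,
    Polynomial.eval_pow, Polynomial.eval_X, Polynomial.eval_one, ← hK] at h3
  have h4 : 1 ≤ p ^ d := Nat.one_le_pow _ _ (by omega)
  zify [h4, (by omega : 1 ≤ p)]
  exact h3

lemma gp_scale {F : Type*} [Field F] [Finite F] (k m : ℕ) (hm : m ≠ 0)
    (hk : k * m ∣ Nat.card F - 1) (e : F) (he : e ^ m = 1) : ∃ w : F, w ≠ 0 ∧ w ^ k = e := by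
  obtain ⟨g, hg⟩ := IsCyclic.exists_generator (α := Fˣ)
  have he0 : e ≠ 0 := by
    rintro rfl
    simp [hm] at he
  obtain ⟨i, hi⟩ := (mem_powers_iff_mem_zpowers.mpr (hg (Units.mk0 e he0)))
  have hi : g ^ i = Units.mk0 e he0 := hi
  have ho : orderOf g = Nat.card F - 1 := by
    rw [orderOf_eq_card_of_forall_mem_zpowers hg, Nat.card_units]
  have h1 : g ^ (i * m) = 1 := by
    rw [pow_mul, hi]
    ext
    simpa using he
  have h2 := orderOf_dvd_of_pow_eq_one h1
  rw [ho] at h2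
  obtain ⟨j, rfl⟩ := Nat.dvd_of_mul_dvd_mul_right (Nat.pos_of_ne_zero hm) (hk.trans h2)
  refine ⟨((g ^ j : Fˣ) : F), Units.ne_zero _, ?_⟩
  rw [← Units.val_pow_eq_pow_val, ← pow_mul, mul_comm j k, hi]
  rfl

lemma gp_int {F : Type*} [Field F] [Fintype F] (p : ℕ) [Fact p.Prime] [Algebra (ZMod p) F]
    (S : Finset F) (hS : ∀ c : ZMod p, c ≠ 0 → ∀ s ∈ S, algebraMap (ZMod p) F c * s ∈ S)
    (ψ : AddChar F ℂ) : ∃ n : ℤ, (n : ℂ) = ∑ s ∈ S, ψ (-s) := by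
  have hp : p.Prime := Fact.out
  have hint : IsIntegral ℤ (∑ s ∈ S, ψ (-s)) := by
    refine IsIntegral.sum _ fun s _ => ?_
    refine IsIntegral.of_pow (n := Fintype.card F) Fintype.card_pos ?_
    rw [← AddChar.map_nsmul_eq_pow, card_nsmul_eq_zero, AddChar.map_zero_eq_one]
    exact isIntegral_one
  have hsum : ∀ c : ZMod p, c ≠ 0 →
      ∑ s ∈ S, ψ (-(algebraMap (ZMod p) F c * s)) = ∑ s ∈ S, ψ (-s) := by
    intro c hc
    have hc' : algebraMap (ZMod p) F c ≠ 0 := by simpa using hc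
    refine Finset.sum_bij' (fun s _ => algebraMap (ZMod p) F c * s)
      (fun s _ => algebraMap (ZMod p) F c⁻¹ * s) (fun s hs => hS c hc s hs)
      (fun s hs => hS _ (inv_ne_zero hc) s hs) ?_ ?_ ?_
    · intro s _
      simp [hc']
    · intro s _
      simp [hc']
    · intro s _
      rfl
  have hline : ∀ s : F, ∃ m : ℤ,
      ∑ c : ZMod p, ψ (-(algebraMap (ZMod p) F c * s)) = (m : ℂ) := by
    intro s
    let φ : AddChar (ZMod p) ℂ := ψ.compAddMonoidHom
      (-((AddMonoidHom.mulRight s).comp (algebraMap (ZMod p) F).toAddMonoidHom))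
    have h := AddChar.sum_eq_ite φ
    have h' : ∑ c : ZMod p, φ c = ∑ c : ZMod p, ψ (-(algebraMap (ZMod p) F c * s)) := rfl
    rw [← h', h]
    split_ifs
    · exact ⟨Fintype.card (ZMod p), by simp⟩
    · exact ⟨0, by simp⟩
  choose m hm using hline
  have key : ((p : ℂ) - 1) * ∑ s ∈ S, ψ (-s) = ((∑ s ∈ S, (m s - 1) : ℤ) : ℂ) := by
    have e1 : ∑ c ∈ (Finset.univ : Finset (ZMod p)).erase 0,
        ∑ s ∈ S, ψ (-(algebraMap (ZMod p) F c * s)) = ((p : ℂ) - 1) * ∑ s ∈ S, ψ (-s) := by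
      rw [Finset.sum_congr rfl (fun c hc => hsum c (Finset.ne_of_mem_erase hc))]
      rw [Finset.sum_const, Finset.card_erase_of_mem (Finset.mem_univ _), Finset.card_univ,
        ZMod.card, nsmul_eq_mul, Nat.cast_sub hp.one_le, Nat.cast_one]
    rw [← e1, Finset.sum_comm]
    push_cast
    refine Finset.sum_congr rfl fun s _ => ?_
    rw [← hm s, Finset.sum_erase_eq_sub (Finset.mem_univ _)]
    simp
  have hp1 : (p : ℂ) - 1 ≠ 0 := by
    rw [sub_ne_zero]
    exact_mod_cast hp.one_lt.ne'
  have hrat : ∑ s ∈ S, ψ (-s)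
      = algebraMap ℚ ℂ (((∑ s ∈ S, (m s - 1) : ℤ) : ℚ) / ((p : ℚ) - 1)) := by
    rw [map_div₀, eq_div_iff (by simpa using hp1), mul_comm]
    simpa using key
  rw [hrat] at hint ⊢
  rw [isIntegral_algebraMap_iff (algebraMap ℚ ℂ).injective] at hint
  obtain ⟨n, hn⟩ := IsIntegrallyClosed.isIntegral_iff.mp hint
  refine ⟨n, ?_⟩
  rw [← hn]
  simp

lemma gp_spec_s12 {F : Type*} [Field F] [Fintype F] (S : Finset F) (A : Matrix F F ℂ)
    (hA : ∀ x y, A x y = if y - x ∈ S then 1 else 0) (μ : ℂ) (hμ : μ ∈ spectrum ℂ A) :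
    ∃ ψ : AddChar F ℂ, μ = ∑ s ∈ S, ψ (-s) := by
  rw [← Matrix.spectrum_toLin', ← Module.End.hasEigenvalue_iff_mem_spectrum] at hμ
  obtain ⟨v, hv⟩ := hμ.exists_hasEigenvector
  have hv1 : A.mulVec v = μ • v := by simpa using hv.apply_eq_smul
  have hv0 : v ≠ 0 := hv.2
  have hex : ∃ ψ : AddChar F ℂ, ∑ x, ψ x * v x ≠ 0 := by
    by_contra hcon
    push Not at hcon
    have hall : ∀ f : F → ℂ, ∑ x, f x * v x = 0 := by
      let L : (F → ℂ) →ₗ[ℂ] ℂ :=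
        { toFun := fun f => ∑ x, f x * v x
          map_add' := by intro f g; simp [add_mul, Finset.sum_add_distrib]
          map_smul' := by intro c f; simp [Finset.mul_sum, mul_assoc] }
      have hL : L = 0 := by
        refine (AddChar.complexBasis F).ext fun ψ => ?_
        simpa [L] using hcon ψ
      intro f
      exact congrArg (fun l => l f) hL
    apply hv0
    funext x
    simpa [Pi.single_apply] using hall (Pi.single x 1)
  obtain ⟨ψ, hψ⟩ := hex
  refine ⟨ψ, ?_⟩
  apply mul_right_cancel₀ hψ
  have h1 : ∑ x, ψ x * (A.mulVec v) x = μ * ∑ x, ψ x * v x := by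
    rw [hv1, Finset.mul_sum]
    refine Finset.sum_congr rfl fun x _ => ?_
    simp only [Pi.smul_apply, smul_eq_mul]
    ring
  rw [← h1]
  simp only [Matrix.mulVec, dotProduct, Finset.mul_sum]
  rw [Finset.sum_comm]
  refine Finset.sum_congr rfl fun y _ => ?_
  have h2 : ∑ x, ψ x * (A x y * v y) = (∑ s ∈ S, ψ (y - s)) * v y := by
    rw [← (Equiv.subLeft y).sum_comp, Finset.sum_mul]
    simp [hA]
  rw [h2, Finset.sum_mul, Finset.sum_mul]
  refine Finset.sum_congr rfl fun s _ => ?_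
  rw [sub_eq_add_neg, AddChar.map_add_eq_mul]
  ring

theorem gpGraph_integral_cyclotomic_family
    (p : ℕ) [Fact p.Prime] (d : ℕ) (hd : 1 < d)
    (K : ℕ) (hK : (K : ℤ) = (Polynomial.cyclotomic d ℤ).eval (p : ℤ)) :
    ∀ a t : ℕ, 1 ≤ a → 1 ≤ t →
      ∀ A : Matrix (GaloisField p (d * a * t)) (GaloisField p (d * a * t)) ℂ,
        (∀ x y, A x y =
          if ∃ z, z ≠ 0 ∧
              z ^ (K * (((p ^ d) ^ (t * a) - 1) / ((p ^ d) ^ t - 1))) = y - x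
          then 1 else 0) →
        spectrum ℂ A ⊆ Set.range ((↑) : ℤ → ℂ) := by
  intro a t ha ht A hA μ hμ
  have hp : p.Prime := Fact.out
  have hp2 := hp.two_le
  set k := K * (((p ^ d) ^ (t * a) - 1) / ((p ^ d) ^ t - 1)) with hk
  have hdvd : k * (p - 1) ∣ Nat.card (GaloisField p (d * a * t)) - 1 := by
    rw [GaloisField.card p _ (by positivity)]
    have e1 : p ^ (d * a * t) = (p ^ d) ^ (t * a) := by
      rw [← pow_mul]; congr 1; ring
    have h1 : (p ^ d) ^ t - 1 ∣ (p ^ d) ^ (t * a) - 1 := by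
      rw [pow_mul _ t a]
      simpa using Nat.sub_dvd_pow_sub_pow ((p ^ d) ^ t) 1 a
    have h2 : p ^ d - 1 ∣ (p ^ d) ^ t - 1 := by
      simpa using Nat.sub_dvd_pow_sub_pow (p ^ d) 1 t
    have h3 := (gp_dvd p d K hp2 hd hK).trans h2
    rw [e1, hk]
    conv_rhs => rw [← Nat.mul_div_cancel' h1]
    rw [mul_right_comm]
    exact Nat.mul_dvd_mul_right h3 _
  let S : Finset (GaloisField p (d * a * t)) := Finset.univ.filter fun x => ∃ z, z ≠ 0 ∧ z ^ k = x
  obtain ⟨ψ, hψ⟩ := gp_spec_s12 S A (by intro x y; simp [hA, S]) μ hμ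
  obtain ⟨n, hn⟩ := gp_int p S (by
    intro c hc s hs
    simp only [S, Finset.mem_filter, Finset.mem_univ, true_and] at hs ⊢
    obtain ⟨z, hz, rfl⟩ := hs
    obtain ⟨w, hw, hwe⟩ := gp_scale k (p - 1) (by omega) hdvd
      (algebraMap (ZMod p) (GaloisField p (d * a * t)) c)
      (by rw [← map_pow, ZMod.pow_card_sub_one_eq_one hc, map_one])
    exact ⟨w * z, mul_ne_zero hw hz, by rw [mul_pow, hwe]⟩) ψ
  exact ⟨n, by rw [hn, hψ]⟩
end

section
/- Let p be an odd prime, q = p^m with m ≥ 1, and let A be the adjacency matrix of the Paley graph Γ(2,q) (directed when q ≡ 3 mod 4). If p ≡ 1 (mod 4), then spectrum ℂ A = { (q−1)/2, (−1+√q)/2, (−1−√q)/2 } as a subset of ℂ, where √q is the positive real square root of q. If p ≡ 3 (mod 4), then spectrum ℂ A = { (q−1)/2, (−1 + i^m·√q)/2, (−1 − i^m·√q)/2 }, where i is the imaginary unit. -/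
open scoped Classical

theorem paley_aux
    (p m : ℕ) (hp : p.Prime) (hodd : Odd p) (hm : 1 ≤ m)
    (F : Type*) [Field F] [Fintype F] [DecidableEq F]
    (hF : Fintype.card F = p ^ m)
    (A : Matrix F F ℂ)
    (hA : ∀ x y : F, A x y = if ∃ z : F, z ≠ 0 ∧ z ^ 2 = y - x then 1 else 0)
    (s : ℂ) (hs : s ^ 2 = ((ZMod.χ₄ p : ℤ) : ℂ) ^ m * (p : ℂ) ^ m) :
    spectrum ℂ A = {(((p ^ m - 1 : ℕ) : ℂ) / 2), (-1 + s) / 2, (-1 - s) / 2} := by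
  have hodd' : Odd (Fintype.card F) := by rw [hF]; exact hodd.pow
  have hchar : ringChar F ≠ 2 := by
    intro h
    have := FiniteField.even_card_of_char_two h
    rcases hodd' with ⟨k, hk⟩
    omega
  set ψ := AddChar.FiniteField.primitiveChar_to_Complex F with hψdef
  have hψ : ψ.IsPrimitive := AddChar.FiniteField.primitiveChar_to_Complex_isPrimitive F
  have hinj : Function.Injective (Int.castRingHom ℂ) := RingHom.injective_int _
  set χ : MulChar F ℂ := (quadraticChar F).ringHomComp (Int.castRingHom ℂ) with hχdef
  have hχ1 : χ ≠ 1 := (MulChar.ringHomComp_ne_one_iff hinj).2 (quadraticChar_ne_one hchar)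
  have hχ2 : χ.IsQuadratic := (quadraticChar_isQuadratic F).comp _
  have hχ (a : F) : χ a = ((quadraticChar F a : ℤ) : ℂ) := rfl
  set G := gaussSum χ ψ with hG
  have hGsq : G ^ 2 = s ^ 2 := by
    rw [hG, gaussSum_sq hχ1 hχ2 hψ, hs, hχ, quadraticChar_neg_one hchar, hF]
    push_cast
    rw [map_pow]
    push_cast
    rfl
  set N : ℂ := (Fintype.card F : ℂ) with hN
  have hN0 : N ≠ 0 := by simp [hN]
  -- the eigenvalues
  let d : F → ℂ := fun a => ∑ r : F, (if ∃ z : F, z ≠ 0 ∧ z ^ 2 = r then (1:ℂ) else 0) * ψ (a * r)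
  have hind (r : F) : (if ∃ z : F, z ≠ 0 ∧ z ^ 2 = r then (1:ℂ) else 0)
      = (1 + χ r - if r = 0 then 1 else 0) / 2 := by
    by_cases hr : r = 0
    · subst hr
      rw [if_neg (by rintro ⟨z, hz, h⟩; exact hz (pow_eq_zero_iff two_ne_zero |>.1 h))]
      simp [hχ]
    · rw [hχ, if_neg hr]
      by_cases h : IsSquare r
      · rw [(quadraticChar_one_iff_isSquare hr).2 h, if_pos]
        · norm_num
        · obtain ⟨z, rfl⟩ := h
          exact ⟨z, by rintro rfl; simp at hr, by ring⟩
      · rw [quadraticChar_neg_one_iff_not_isSquare.2 h, if_neg]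
        · norm_num
        · rintro ⟨z, _, rfl⟩
          exact h ⟨z, by ring⟩
  have hd (a : F) : d a = ((if a = 0 then N else 0) + gaussSum χ (ψ.mulShift a) - 1) / 2 := by
    have h1 : ∑ r : F, ψ (r * a) = if a = 0 then N else 0 := by
      rw [AddChar.sum_mulShift a hψ]; split_ifs <;> simp [hN]
    have h2 : ∑ r : F, (if r = 0 then (1:ℂ) else 0) * ψ (a * r) = 1 := by
      simp
    rw [← h1, ← h2, gaussSum, ← Finset.sum_add_distrib, ← Finset.sum_sub_distrib, Finset.sum_div]
    refine Finset.sum_congr rfl fun r _ => ?_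
    rw [hind, AddChar.mulShift_apply, mul_comm r a]
    ring
  have hd0 : d 0 = ((p ^ m - 1 : ℕ) : ℂ) / 2 := by
    rw [hd, AddChar.mulShift_zero, gaussSum_one_right hχ1, if_pos rfl, hN, hF,
      Nat.cast_sub (Nat.one_le_pow _ _ hp.pos)]
    push_cast; ring
  have hda (a : F) (ha : a ≠ 0) : d a = (-1 + χ a * G) / 2 := by
    have h := gaussSum_mulShift χ ψ (Units.mk0 a ha)
    have h2 : χ a * χ a = 1 := by
      rw [hχ, ← Int.cast_mul, ← sq, quadraticChar_sq_one ha]; simp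
    simp only [Units.val_mk0] at h
    rw [hd, if_neg ha, hG, ← h, ← mul_assoc, h2]
    ring
  -- diagonalization
  let P : Matrix F F ℂ := Matrix.of fun x a => ψ (a * x)
  let Q : Matrix F F ℂ := Matrix.of fun a y => N⁻¹ * ψ (-(a * y))
  have hPQ : P * Q = 1 := by
    ext x y
    have h : ∀ a : F, P x a * Q a y = N⁻¹ * ψ (a * (x - y)) := by
      intro a
      simp only [P, Q, Matrix.of_apply]
      rw [mul_sub, sub_eq_add_neg, AddChar.map_add_eq_mul]; ring
    rw [Matrix.mul_apply, Finset.sum_congr rfl fun a _ => h a, ← Finset.mul_sum,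
      AddChar.sum_mulShift _ hψ, Matrix.one_apply]
    by_cases hxy : x = y
    · simp [hxy, hN]
    · simp [hxy, sub_eq_zero]
  have hQP : Q * P = 1 := mul_eq_one_comm.1 hPQ
  let u : (Matrix F F ℂ)ˣ := ⟨P, Q, hPQ, hQP⟩
  have hAP : A * P = P * Matrix.diagonal d := by
    ext x a
    rw [Matrix.mul_apply, Matrix.mul_diagonal]
    simp only [P, Matrix.of_apply, d]
    rw [Finset.mul_sum, ← Equiv.sum_comp (Equiv.addLeft x)]
    refine Finset.sum_congr rfl fun r _ => ?_
    simp only [Equiv.coe_addLeft, hA, add_sub_cancel_left, mul_add, AddChar.map_add_eq_mul]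
    ring
  have hAu : A = u * Matrix.diagonal d * (u⁻¹ : (Matrix F F ℂ)ˣ) := by
    change A = P * Matrix.diagonal d * Q
    rw [← hAP, mul_assoc, hPQ, mul_one]
  rw [hAu, spectrum.units_conjugate, spectrum_diagonal]
  obtain ⟨b, hb⟩ := quadraticChar_exists_neg_one hchar
  have hb0 : b ≠ 0 := by rintro rfl; simp at hb
  have hd1 : d 1 = (-1 + G) / 2 := by rw [hda 1 one_ne_zero, map_one, one_mul]
  have hdb : d b = (-1 - G) / 2 := by rw [hda b hb0, hχ, hb]; push_cast; ring
  have key : Set.range d = {(((p ^ m - 1 : ℕ) : ℂ) / 2), (-1 + G) / 2, (-1 - G) / 2} := by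
    ext μ
    simp only [Set.mem_range, Set.mem_insert_iff, Set.mem_singleton_iff]
    constructor
    · rintro ⟨a, rfl⟩
      by_cases ha : a = 0
      · left; rw [ha, hd0]
      · right
        rw [hda a ha, hχ]
        rcases quadraticChar_dichotomy ha with h | h
        · left; rw [h]; simp
        · right; rw [h]; push_cast; ring
    · rintro (rfl | rfl | rfl)
      exacts [⟨0, hd0⟩, ⟨1, hd1⟩, ⟨b, hdb⟩]
  rw [key]
  rcases sq_eq_sq_iff_eq_or_eq_neg.1 hGsq with h | h
  · rw [h]
  · rw [h, sub_neg_eq_add, ← sub_eq_add_neg, Set.pair_comm]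


theorem paleyGraph_spectrum
    (p m : ℕ) (hp : p.Prime) (hodd : Odd p) (hm : 1 ≤ m)
    (F : Type*) [Field F] [Fintype F] [DecidableEq F]
    (hF : Fintype.card F = p ^ m)
    (A : Matrix F F ℂ)
    (hA : ∀ x y : F, A x y = if ∃ z : F, z ≠ 0 ∧ z ^ 2 = y - x then 1 else 0) :
    (p % 4 = 1 →
      spectrum ℂ A =
        {(((p ^ m - 1 : ℕ) : ℂ) / 2),
         ((-1 + (Real.sqrt ((p : ℝ) ^ m) : ℂ)) / 2),
         ((-1 - (Real.sqrt ((p : ℝ) ^ m) : ℂ)) / 2)}) ∧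
    (p % 4 = 3 →
      spectrum ℂ A =
        {(((p ^ m - 1 : ℕ) : ℂ) / 2),
         ((-1 + Complex.I ^ m * (Real.sqrt ((p : ℝ) ^ m) : ℂ)) / 2),
         ((-1 - Complex.I ^ m * (Real.sqrt ((p : ℝ) ^ m) : ℂ)) / 2)}) := by

  have hsq : ((Real.sqrt ((p : ℝ) ^ m) : ℝ) : ℂ) ^ 2 = (p : ℂ) ^ m := by
    rw [← Complex.ofReal_pow, Real.sq_sqrt (by positivity)]
    push_cast; rfl
  constructor
  · intro h
    apply paley_aux p m hp hodd hm F hF A hA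
    rw [hsq, ZMod.χ₄_nat_one_mod_four h]
    simp
  · intro h
    apply paley_aux p m hp hodd hm F hF A hA
    rw [mul_pow, hsq, ZMod.χ₄_nat_three_mod_four h, ← pow_mul, mul_comm m 2, pow_mul, Complex.I_sq]
    simp
end

section
/- Let p be an odd prime, q = p^m with m ≥ 1, and k a positive divisor of q−1 with −1 ∉ R_k (i.e. Γ(k,q) is directed). Let A be the adjacency matrix of Γ(k,q) with natural number entries (A x y = 1 if y − x ∈ R_k, else 0). Then: (i) if k ≠ q−1, the period of Γ(k,q) is 1, i.e. for every natural number d, if d divides every positive ℓ for which the trace of A^ℓ is nonzero, then d = 1; (ii) if k = q−1, the period is p, i.e. for every positive ℓ, the trace of A^ℓ is nonzero if and only if p divides ℓ. -/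
open scoped Classical

theorem gp_walk {F : Type*} [Field F] [Fintype F] [DecidableEq F] (k : ℕ)
    (A : Matrix F F ℕ)
    (hA : ∀ x y : F, A x y = if ∃ z : F, z ≠ 0 ∧ z ^ k = y - x then 1 else 0)
    (f : ℕ → F) (hf : ∀ i, ∃ z : F, z ≠ 0 ∧ z ^ k = f i) (n : ℕ) (x : F) :
    (A ^ n) x (x + ∑ i ∈ Finset.range n, f i) ≠ 0 := by
  induction n with
  | zero => simp
  | succ n ih =>
    rw [pow_succ, Matrix.mul_apply, Finset.sum_range_succ]
    intro h
    rw [Finset.sum_eq_zero_iff] at h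
    have h1 := h (x + ∑ i ∈ Finset.range n, f i) (Finset.mem_univ _)
    rw [hA] at h1
    have e : x + (∑ i ∈ Finset.range n, f i + f n) - (x + ∑ i ∈ Finset.range n, f i) = f n := by
      ring
    rw [e, if_pos (hf n), mul_one] at h1
    exact ih h1

theorem gp_trace {F : Type*} [Field F] [Fintype F] [DecidableEq F] (k : ℕ)
    (A : Matrix F F ℕ)
    (hA : ∀ x y : F, A x y = if ∃ z : F, z ≠ 0 ∧ z ^ k = y - x then 1 else 0)
    (f : ℕ → F) (hf : ∀ i, ∃ z : F, z ≠ 0 ∧ z ^ k = f i) (n : ℕ)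
    (h0 : ∑ i ∈ Finset.range n, f i = 0) :
    (A ^ n).trace ≠ 0 := by
  intro h
  rw [Matrix.trace, Finset.sum_eq_zero_iff] at h
  have h1 := h 0 (Finset.mem_univ _)
  have h2 := gp_walk k A hA f hf n 0
  rw [h0, add_zero] at h2
  exact h2 h1

theorem gpDigraph_periods
    (p m k : ℕ) (hp : p.Prime) (hodd : Odd p) (hm : 1 ≤ m)
    (F : Type*) [Field F] [Fintype F] [DecidableEq F]
    (hF : Fintype.card F = p ^ m)
    (hk : 0 < k) (hkdvd : k ∣ p ^ m - 1)
    (hdir : ¬ ∃ z : F, z ≠ 0 ∧ z ^ k = -1)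
    (A : Matrix F F ℕ)
    (hA : ∀ x y : F, A x y = if ∃ z : F, z ≠ 0 ∧ z ^ k = y - x then 1 else 0) :
    (k ≠ p ^ m - 1 →
      ∀ d : ℕ, (∀ ℓ : ℕ, 0 < ℓ → (A ^ ℓ).trace ≠ 0 → d ∣ ℓ) → d = 1) ∧
    (k = p ^ m - 1 →
      ∀ ℓ : ℕ, 0 < ℓ → ((A ^ ℓ).trace ≠ 0 ↔ p ∣ ℓ)) := by
  have hpF : (p : F) = 0 := by
    have h : ((Fintype.card F : ℕ) : F) = 0 := Nat.cast_card_eq_zero F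
    rw [hF, Nat.cast_pow] at h
    exact pow_eq_zero_iff (by omega) |>.1 h
  have hpm : 1 < p ^ m := Nat.one_lt_pow (by omega) hp.one_lt
  have hone : ∀ ℓ : ℕ, p ∣ ℓ → (A ^ ℓ).trace ≠ 0 := by
    rintro ℓ ⟨c, rfl⟩
    apply gp_trace k A hA (fun _ => 1) (fun _ => ⟨1, one_ne_zero, one_pow _⟩)
    simp [hpF]
  refine ⟨fun hne d hd => ?_, fun hkq ℓ hℓ => ⟨fun h => ?_, hone ℓ⟩⟩
  · have hdp : d ∣ p := hd p hp.pos (hone p dvd_rfl)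
    obtain ⟨n, hn⟩ := hkdvd
    have hn0 : 0 < n := by
      rcases Nat.eq_zero_or_pos n with h | h
      · subst h; omega
      · exact h
    obtain ⟨g, hg⟩ := IsCyclic.exists_generator (α := Fˣ)
    have hord : orderOf g = p ^ m - 1 := by
      rw [orderOf_eq_card_of_forall_mem_zpowers hg, Nat.card_eq_fintype_card,
        Fintype.card_units, hF]
    have hw : ((g : F) ^ k) ≠ 1 := by
      intro h
      have h1 : g ^ k = 1 := by ext; simpa using h
      have h2 := orderOf_dvd_of_pow_eq_one h1
      rw [hord] at h2
      exact hne (Nat.dvd_antisymm ⟨n, hn⟩ h2)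
    have hwn : ((g : F) ^ k) ^ n = 1 := by
      rw [← pow_mul, ← hn, ← hord, ← Units.val_pow_eq_pow_val, pow_orderOf_eq_one, Units.val_one]
    have hdn : d ∣ n := by
      apply hd n hn0
      apply gp_trace k A hA (fun i => ((g : F) ^ k) ^ i)
        (fun i => ⟨(g : F) ^ i, pow_ne_zero _ g.ne_zero, pow_right_comm _ _ _⟩)
      have h := geom_sum_mul ((g : F) ^ k) n
      rw [hwn, sub_self] at h
      exact (mul_eq_zero.1 h).resolve_right (sub_ne_zero.2 hw)
    rcases (Nat.dvd_prime hp).1 hdp with h | h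
    · exact h
    · exfalso
      subst h
      have h1 : d ∣ d ^ m - 1 := hn ▸ Dvd.dvd.mul_left hdn k
      have h2 : d ∣ d ^ m := dvd_pow_self d (by omega)
      have h3 := (Nat.dvd_sub_iff_right hpm.le h2).1 h1
      exact hp.one_lt.ne' (Nat.dvd_one.1 h3)
  · have hA' : ∀ x y : F, A x y ≠ 0 → y = x + 1 := by
      intro x y h
      rw [hA] at h
      by_cases h' : ∃ z : F, z ≠ 0 ∧ z ^ k = y - x
      · obtain ⟨z, hz, hz'⟩ := h'
        rw [hkq, ← hF, FiniteField.pow_card_sub_one_eq_one z hz] at hz'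
        rw [hz']; ring
      · simp [h'] at h
    have key : ∀ (n : ℕ) (x y : F), (A ^ n) x y ≠ 0 → y = x + n := by
      intro n
      induction n with
      | zero =>
        intro x y h
        by_contra hxy
        apply h
        rw [pow_zero, Matrix.one_apply_ne]
        rintro rfl; simp at hxy
      | succ n ih =>
        intro x y h
        rw [pow_succ, Matrix.mul_apply] at h
        obtain ⟨z, -, hz⟩ := Finset.exists_ne_zero_of_sum_ne_zero h
        rw [hA' z y (right_ne_zero_of_mul hz), ih x z (left_ne_zero_of_mul hz)]
        push_cast; ring
    obtain ⟨x, -, hx⟩ := Finset.exists_ne_zero_of_sum_ne_zero h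
    have h1 := key ℓ x x hx
    have h2 : (ℓ : F) = 0 := by simpa using h1
    haveI : Fact p.Prime := ⟨hp⟩
    haveI : CharP F p := by
      obtain ⟨c, hc⟩ := CharP.exists F
      have : c ∣ p := (CharP.cast_eq_zero_iff F c p).1 hpF
      rcases (Nat.dvd_prime hp).1 this with h | h
      · exact absurd h (CharP.char_ne_one F c)
      · exact h ▸ hc
    exact (CharP.cast_eq_zero_iff F p ℓ).1 h2
end

section
/- Let q = p^m with p prime and m ≥ 1, and k a positive divisor of q−1. For a natural number s and an exponent j, say that j is s-representable if every a ∈ F_q can be written a = x₁^j + ⋯ + x_s^j with x_i ∈ F_q, and say that k is weakly s-representable if every a ∈ F_q can be written a = ε₁·x₁^k + ⋯ + ε_s·x_s^k with x_i ∈ F_q and each ε_i ∈ {1, −1}. Then: (i) there exists s such that k is weakly s-representable if and only if there exists s such that k is s-representable; (ii) if −1 ∈ R_k, then for every s, k is weakly s-representable iff k is s-representable (so w(k,q) = g(k,q)); (iii) if q is odd and −1 ∉ R_k (so k is even), then for every s, k is weakly s-representable iff k/2 is s-representable (so w(k,q) = g(k/2,q)). -/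
theorem aux_neg_pow {F : Type*} [Field F] [Fintype F] (k n h : ℕ)
    (hodd : Odd (Fintype.card F)) (hn : Fintype.card F - 1 = k * n) (hh : k = 2 * h)
    (hno : ¬ ∃ z : F, z ≠ 0 ∧ z ^ k = -1) :
    (∃ w : F, w ^ h = -1) ∧ ∀ y : F, ∃ x ε : F, (ε = 1 ∨ ε = -1) ∧ ε * x ^ k = y ^ h := by
  have hc : ringChar F ≠ 2 := by
    intro h2
    have := FiniteField.even_card_of_char_two h2
    rw [Nat.odd_iff] at hodd
    omega
  obtain ⟨g, hg⟩ := FiniteField.exists_nonsquare hc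
  have hnz : ∀ y : F, ¬ IsSquare y → y ≠ 0 := by
    rintro y hy rfl
    exact hy (IsSquare.zero)
  have hns : ∀ y : F, ¬ IsSquare y → y ^ (Fintype.card F / 2) = -1 := by
    intro y hy
    have h0 := hnz y hy
    rcases FiniteField.pow_dichotomy hc h0 with h1 | h1
    · exact absurd ((FiniteField.isSquare_iff hc h0).2 h1) hy
    · exact h1
  have hq : Fintype.card F / 2 = n * h := by
    obtain ⟨t, ht⟩ := hodd
    subst hh
    have : 2 * (n * h) = 2 * h * n := by ring
    omega
  have hw : (g ^ n) ^ h = -1 := by rw [← pow_mul, ← hq]; exact hns g hg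
  have hwn : ¬ IsSquare (g ^ n) := by
    rintro ⟨r, hr⟩
    apply hno
    refine ⟨r, ?_, ?_⟩
    · rintro rfl
      rw [mul_zero] at hr
      exact pow_ne_zero n (hnz g hg) hr
    · rw [hh, pow_mul, pow_two, ← hr, hw]
  refine ⟨⟨_, hw⟩, fun y => ?_⟩
  by_cases hy : IsSquare y
  · obtain ⟨r, rfl⟩ := hy
    exact ⟨r, 1, Or.inl rfl, by rw [hh, pow_mul, pow_two, one_mul]⟩
  · have h1 : IsSquare (y * g ^ n) := by
      rw [FiniteField.isSquare_iff hc (mul_ne_zero (hnz y hy) (hnz _ hwn)), mul_pow, hns y hy,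
        hns _ hwn]
      ring
    obtain ⟨r, hr⟩ := h1
    exact ⟨r, -1, Or.inr rfl, by rw [hh, pow_mul, pow_two, ← hr, mul_pow, hw]; ring⟩

theorem weak_waring_reduction
    (p m k : ℕ) (hp : p.Prime) (hm : 1 ≤ m)
    (F : Type*) [Field F] [Fintype F]
    (hF : Fintype.card F = p ^ m)
    (hk : 0 < k) (hkdvd : k ∣ p ^ m - 1) :
    ((∃ s : ℕ, ∀ a : F, ∃ (x : Fin s → F) (ε : Fin s → F),
        (∀ i, ε i = 1 ∨ ε i = -1) ∧ a = ∑ i, ε i * (x i) ^ k) ↔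
      (∃ s : ℕ, ∀ a : F, ∃ x : Fin s → F, a = ∑ i, (x i) ^ k)) ∧
    ((∃ z : F, z ≠ 0 ∧ z ^ k = -1) →
      ∀ s : ℕ,
        ((∀ a : F, ∃ (x : Fin s → F) (ε : Fin s → F),
            (∀ i, ε i = 1 ∨ ε i = -1) ∧ a = ∑ i, ε i * (x i) ^ k) ↔
          (∀ a : F, ∃ x : Fin s → F, a = ∑ i, (x i) ^ k))) ∧
    (Odd (p ^ m) → (¬ ∃ z : F, z ≠ 0 ∧ z ^ k = -1) →
      ∀ s : ℕ,
        ((∀ a : F, ∃ (x : Fin s → F) (ε : Fin s → F),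
            (∀ i, ε i = 1 ∨ ε i = -1) ∧ a = ∑ i, ε i * (x i) ^ k) ↔
          (∀ a : F, ∃ x : Fin s → F, a = ∑ i, (x i) ^ (k / 2)))) := by
  have weak : ∀ s : ℕ, (∀ a : F, ∃ x : Fin s → F, a = ∑ i, (x i) ^ k) →
      (∀ a : F, ∃ (x : Fin s → F) (ε : Fin s → F),
        (∀ i, ε i = 1 ∨ ε i = -1) ∧ a = ∑ i, ε i * (x i) ^ k) := by
    intro s h a
    obtain ⟨x, hx⟩ := h a
    exact ⟨x, fun _ => 1, fun _ => Or.inl rfl, by simpa using hx⟩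
  refine ⟨⟨?_, ?_⟩, ?_, ?_⟩
  · rintro ⟨s, hs⟩
    haveI : Fact p.Prime := ⟨hp⟩
    haveI : CharP F p := charP_of_card_eq_prime_pow hF
    obtain ⟨r, hr⟩ : ∃ r, p = r + 2 := ⟨p - 2, by have := hp.two_le; omega⟩
    have hp0 : (r : F) + 2 = 0 := by
      have := CharP.cast_eq_zero F p
      rw [hr] at this
      exact_mod_cast this
    have key : ∀ x ε : F, (ε = 1 ∨ ε = -1) →
        ∃ y : Fin (r + 1) → F, ε * x ^ k = ∑ j, (y j) ^ k := by
      rintro x ε (rfl | rfl)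
      · refine ⟨Fin.cons x (fun _ => 0), ?_⟩
        simp [Fin.sum_univ_succ, hk.ne']
      · refine ⟨fun _ => x, ?_⟩
        simp only [Finset.sum_const, Finset.card_univ, Fintype.card_fin, nsmul_eq_mul]
        push_cast
        linear_combination (-x ^ k) * hp0
    refine ⟨s * (r + 1), fun a => ?_⟩
    obtain ⟨x, ε, hε, ha⟩ := hs a
    choose y hy using fun i => key (x i) (ε i) (hε i)
    refine ⟨fun i => y (finProdFinEquiv.symm i).1 (finProdFinEquiv.symm i).2, ?_⟩
    rw [ha, Equiv.sum_comp finProdFinEquiv.symm (fun z : Fin s × Fin (r + 1) => y z.1 z.2 ^ k),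
      Fintype.sum_prod_type]
    exact Finset.sum_congr rfl fun i _ => hy i
  · rintro ⟨s, hs⟩
    exact ⟨s, weak s hs⟩
  · rintro ⟨z, -, hz⟩ s
    refine ⟨fun h a => ?_, weak s⟩
    obtain ⟨x, ε, hε, ha⟩ := h a
    have key : ∀ i, ∃ y : F, ε i * x i ^ k = y ^ k := by
      intro i
      rcases hε i with h | h
      · exact ⟨x i, by rw [h, one_mul]⟩
      · exact ⟨z * x i, by rw [h, mul_pow, hz]⟩
    choose y hy using key
    exact ⟨y, by rw [ha]; exact Finset.sum_congr rfl fun i _ => hy i⟩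
  · intro hodd hno s
    obtain ⟨n, hn⟩ := hkdvd
    have hkk : k = 2 * (k / 2) := by
      rcases Nat.even_or_odd k with h | h
      · obtain ⟨t, ht⟩ := h
        omega
      · exact absurd ⟨-1, by simp, h.neg_one_pow⟩ hno
    rw [← hF] at hodd hn
    obtain ⟨⟨w, hw⟩, H⟩ := aux_neg_pow k n (k / 2) hodd hn hkk hno
    constructor
    · intro h a
      obtain ⟨x, ε, hε, ha⟩ := h a
      have key : ∀ i, ∃ y : F, ε i * x i ^ k = y ^ (k / 2) := by
        intro i
        have e : x i ^ k = (x i ^ 2) ^ (k / 2) := by rw [← pow_mul, ← hkk]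
        rcases hε i with h | h
        · exact ⟨x i ^ 2, by rw [h, one_mul, e]⟩
        · exact ⟨w * x i ^ 2, by rw [h, mul_pow, hw, e]⟩
      choose y hy using key
      exact ⟨y, by rw [ha]; exact Finset.sum_congr rfl fun i _ => hy i⟩
    · intro h a
      obtain ⟨y, ha⟩ := h a
      choose x ε hε hx using fun i => H (y i)
      exact ⟨x, ε, hε, by rw [ha]; exact Finset.sum_congr rfl fun i _ => (hx i).symm⟩
end

section
/- Let p be a prime and a, b, c positive integers such that c divides p^a − 1 but c does not divide p^t − 1 for any 1 ≤ t < a, and bc divides p^{ab} − 1 but bc does not divide p^t − 1 for any 1 ≤ t < ab. Let K₁ = GaloisField p a and K₂ = GaloisField p (a·b). Then there exist least natural numbers w₁ and w₂ such that: every element of K₁ is a sum of w₁ terms of the form ±x^{(p^a−1)/c} with x ∈ K₁ and independently chosen signs, and every element of K₂ is a sum of w₂ terms of the form ±x^{(p^{ab}−1)/(bc)} with x ∈ K₂ and independently chosen signs; and moreover w₂ = b·w₁. That is, w((p^{ab}−1)/(bc), p^{ab}) = b·w((p^a−1)/c, p^a). -/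
def WWRep {A : Type*} [AddCommMonoid A] (S : Set A) (s : ℕ) (x : A) : Prop :=
  ∃ f : Fin s → A, (∀ i, f i ∈ S) ∧ x = ∑ i, f i

def WWSet {K : Type*} [Field K] (k : ℕ) : Set K :=
  {z | ∃ y ε : K, (ε = 1 ∨ ε = -1) ∧ z = ε * y ^ k}

lemma WWRep.succ {A : Type*} [AddCommMonoid A] {S : Set A} {s : ℕ} {x y : A}
    (h : WWRep S s x) (hy : y ∈ S) : WWRep S (s+1) (x + y) := by
  obtain ⟨f, hf, rfl⟩ := h
  refine ⟨Fin.snoc f y, ?_, ?_⟩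
  · intro i
    refine Fin.lastCases ?_ (fun j => ?_) i
    · simpa using hy
    · simpa using hf j
  · simp [Fin.sum_univ_castSucc]

lemma WWRep.mono {A : Type*} [AddCommMonoid A] {S : Set A} (h0 : (0:A) ∈ S) {s t : ℕ} {x : A}
    (h : WWRep S s x) (hst : s ≤ t) : WWRep S t x := by
  induction hst with
  | refl => exact h
  | step _ ih => simpa using ih.succ h0

lemma WWRep.sum {A ι : Type*} [AddCommMonoid A] {S : Set A} (t : Finset ι) (f : ι → A)
    (hf : ∀ i ∈ t, f i ∈ S) : WWRep S t.card (∑ i ∈ t, f i) := by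
  classical
  induction t using Finset.induction_on with
  | empty => exact ⟨fun _ => 0, fun i => i.elim0, by simp⟩
  | insert a t ha ih =>
    rw [Finset.card_insert_of_notMem ha, Finset.sum_insert ha, add_comm (f a)]
    exact (ih fun i hi => hf i (Finset.mem_insert_of_mem hi)).succ (hf a (Finset.mem_insert_self _ _))

lemma WWRep.add {A : Type*} [AddCommMonoid A] {S : Set A} {s t : ℕ} {x y : A}
    (h : WWRep S s x) (h' : WWRep S t y) : WWRep S (s+t) (x + y) := by
  obtain ⟨f, hf, rfl⟩ := h
  obtain ⟨g, hg, rfl⟩ := h'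
  have := WWRep.sum (S := S) (Finset.univ : Finset (Fin s ⊕ Fin t)) (Sum.elim f g)
    (by rintro (i | i) _ <;> simp [hf, hg])
  simpa using this

lemma ww_isLeast {A B : Type*} [AddCommMonoid A] [AddCommMonoid B] {b : ℕ}
    (φ : (Fin b → A) ≃+ B) (S : Set A) (T : Set B) (h0 : (0:A) ∈ S)
    (hT : ∀ z, z ∈ T ↔ ∃ i, ∃ y ∈ S, z = φ (Pi.single i y)) {w : ℕ}
    (hw : IsLeast {s | ∀ x, WWRep S s x} w) : IsLeast {s | ∀ x, WWRep T s x} (b * w) := by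
  constructor
  · intro x
    obtain ⟨v, rfl⟩ := φ.surjective x
    choose f hf hv using fun i => hw.1 (v i)
    have := WWRep.sum (S := T) (Finset.univ : Finset (Fin b × Fin w))
      (fun q => φ (Pi.single q.1 (f q.1 q.2))) (fun q _ => (hT _).2 ⟨_, _, hf _ _, rfl⟩)
    simp only [Finset.card_univ, Fintype.card_prod, Fintype.card_fin] at this
    convert this
    rw [← map_sum]
    congr 1
    ext i
    rw [hv i, Finset.sum_apply, Fintype.sum_prod_type, Finset.sum_eq_single i]
    · simp
    · intro j _ hj
      simp [Pi.single_apply, hj.symm]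
    · simp
  · intro s hs
    by_contra hlt
    push Not at hlt
    have hwpos : 0 < w := by
      rcases Nat.eq_zero_or_pos w with h | h
      · simp [h] at hlt
      · exact h
    obtain ⟨x, hx⟩ : ∃ x, ¬ WWRep S (w-1) x := by
      by_contra! h
      have := hw.2 (show w - 1 ∈ {s | ∀ x, WWRep S s x} from h)
      omega
    obtain ⟨f, hf, hsum⟩ := hs (φ fun _ => x)
    choose k y hy hfy using fun j => (hT _).1 (hf j)
    have e : (fun _ => x) = ∑ j, (Pi.single (k j) (y j) : Fin b → A) := by
      apply φ.injective
      rw [hsum, map_sum]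
      exact Finset.sum_congr rfl fun j _ => hfy j
    have hn : ∀ i : Fin b, w ≤ (Finset.univ.filter fun j => k j = i).card := by
      intro i
      by_contra! hlt
      apply hx
      have e' := congrFun e i
      rw [Finset.sum_apply] at e'
      have := WWRep.sum (S := S) (Finset.univ.filter fun j => k j = i) y (fun j _ => hy j)
      rw [Finset.sum_filter] at this
      have h2 : x = ∑ j, if k j = i then y j else 0 := by
        refine e'.trans (Finset.sum_congr rfl fun j _ => ?_)
        simp [Pi.single_apply, eq_comm]
      rw [← h2] at this
      exact this.mono h0 (by omega)
    have h3 : ∑ i : Fin b, (Finset.univ.filter fun j => k j = i).card = s := by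
      rw [← Finset.card_eq_sum_card_fiberwise (fun _ _ => Finset.mem_coe.2 (Finset.mem_univ _))]
      simp
    have h4 := Finset.sum_le_sum (s := Finset.univ) fun i _ => hn i
    rw [h3] at h4
    simp at h4
    omega

lemma ww_exists_prim {K : Type*} [Field K] [Finite K] {N d : ℕ} (hN : Nat.card K = N)
    (hd : d ∣ N - 1) : ∃ ζ : K, IsPrimitiveRoot ζ d ∧ ∀ z : K, z ^ d = 1 → ∃ y, z = y ^ ((N-1)/d) := by
  have hN1 : 0 < N - 1 := by
    have := Finite.one_lt_card (α := K); omega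
  obtain ⟨g, hg⟩ := IsCyclic.exists_generator (α := Kˣ)
  have ho := orderOf_eq_card_of_forall_mem_zpowers hg
  rw [Nat.card_units, hN] at ho
  have hp : IsPrimitiveRoot (g : K) (N-1) := by
    rw [← ho]
    exact (IsPrimitiveRoot.orderOf g).map_of_injective (f := Units.coeHom K) Units.val_injective
  have hd0 : 0 < d := Nat.pos_of_dvd_of_pos hd hN1
  have e : N - 1 = (N-1)/d * d := (Nat.div_mul_cancel hd).symm
  refine ⟨(g:K)^((N-1)/d), hp.pow hN1 e, fun z hz => ?_⟩
  have : NeZero d := ⟨hd0.ne'⟩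
  obtain ⟨i, _, hi⟩ := (hp.pow hN1 e).eq_pow_of_pow_eq_one hz
  exact ⟨(g:K)^i, by rw [← hi, ← pow_mul, ← pow_mul, mul_comm]⟩

lemma ww_mem {K : Type*} [Field K] [Finite K] {N d : ℕ} (hN : Nat.card K = N)
    (hd : d ∣ N - 1) (z : K) :
    z ∈ WWSet ((N-1)/d) ↔ z = 0 ∨ ∃ u, u ^ d = 1 ∧ (z = u ∨ z = -u) := by
  have hN1 : 0 < N - 1 := by
    have := Finite.one_lt_card (α := K); omega
  constructor
  · rintro ⟨y, ε, hε, rfl⟩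
    by_cases hy : y = 0
    · left
      have : (N-1)/d ≠ 0 := (Nat.div_pos (Nat.le_of_dvd hN1 hd) (Nat.pos_of_dvd_of_pos hd hN1)).ne'
      simp [hy, this]
    · right
      refine ⟨y^((N-1)/d), ?_, ?_⟩
      · rw [← pow_mul, Nat.div_mul_cancel hd, ← hN]
        haveI := Fintype.ofFinite K
        rw [Nat.card_eq_fintype_card]
        exact FiniteField.pow_card_sub_one_eq_one y hy
      · rcases hε with rfl | rfl <;> simp
  · rintro (rfl | ⟨u, hu, h⟩)
    · have : (N-1)/d ≠ 0 := (Nat.div_pos (Nat.le_of_dvd hN1 hd) (Nat.pos_of_dvd_of_pos hd hN1)).ne'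
      exact ⟨0, 1, Or.inl rfl, by simp [this]⟩
    · obtain ⟨ζ, _, hζ⟩ := ww_exists_prim hN hd
      obtain ⟨y, rfl⟩ := hζ u hu
      rcases h with h | h
      · exact ⟨y, 1, Or.inl rfl, by simp [h]⟩
      · exact ⟨y, -1, Or.inr rfl, by simp [h]⟩

lemma ww_adjoin {K : Type*} [Field K] [Finite K] (p : ℕ) [Fact p.Prime] [Algebra (ZMod p) K]
    {n d : ℕ} (hn : Module.finrank (ZMod p) K = n) {ζ : K} (hζ : IsPrimitiveRoot ζ d) (hd0 : d ≠ 0)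
    (hd : ∀ t : ℕ, 1 ≤ t → t < n → ¬ d ∣ p ^ t - 1) :
    Algebra.adjoin (ZMod p) {ζ} = ⊤ := by
  have : Module.Finite (ZMod p) K := Module.Finite.of_finite
  have hL : IntermediateField.adjoin (ZMod p) {ζ} = ⊤ := by
    set L := IntermediateField.adjoin (ZMod p) {ζ} with hLdef
    have hle : Module.finrank (ZMod p) L ≤ n := hn ▸ Submodule.finrank_le L.toSubalgebra.toSubmodule
    have hpos : 0 < Module.finrank (ZMod p) L := Module.finrank_pos
    have hcard : Nat.card L = p ^ Module.finrank (ZMod p) L := by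
      rw [Module.natCard_eq_pow_finrank (K := ZMod p), Nat.card_zmod]
    have hdiv : d ∣ p ^ Module.finrank (ZMod p) L - 1 := by
      apply hζ.dvd_of_pow_eq_one
      have hmem : ζ ∈ L := IntermediateField.mem_adjoin_simple_self _ _
      haveI := Fintype.ofFinite L
      have hne : (⟨ζ, hmem⟩ : L) ≠ 0 := by
        intro h
        exact hζ.ne_zero hd0 (congrArg Subtype.val h)
      have := FiniteField.pow_card_sub_one_eq_one (⟨ζ, hmem⟩ : L) hne
      rw [← Nat.card_eq_fintype_card, hcard] at this
      exact congrArg Subtype.val this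
    have heq : Module.finrank (ZMod p) L = n := by
      by_contra hne
      exact hd _ hpos (lt_of_le_of_ne hle hne) hdiv
    apply IntermediateField.eq_of_le_of_finrank_eq le_top
    rw [heq, IntermediateField.finrank_top', hn]
  rw [← IntermediateField.adjoin_simple_toSubalgebra_of_isAlgebraic (Algebra.IsAlgebraic.isAlgebraic ζ), hL]
  rfl

lemma ww_nonempty {K : Type*} [Field K] [Finite K] (p : ℕ) [Fact p.Prime] [Algebra (ZMod p) K]
    {S : Set K} (h0 : 0 ∈ S) {ζ : K} (hζ : Algebra.adjoin (ZMod p) {ζ} = ⊤)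
    (hS : ∀ m : ℕ, ζ ^ m ∈ S) : ∃ s, ∀ x, WWRep S s x := by
  have key : ∀ x : K, ∃ s, WWRep S s x := by
    intro x
    have hx : x ∈ Submodule.span (ZMod p) (Submonoid.closure {ζ} : Set K) := by
      rw [← Algebra.adjoin_eq_span, hζ]; trivial
    induction hx using Submodule.span_induction with
    | mem x h =>
      obtain ⟨m, rfl⟩ := Submonoid.mem_closure_singleton.1 h
      exact ⟨1, fun _ => ζ ^ m, fun _ => hS m, by simp⟩
    | zero => exact ⟨0, fun _ => 0, fun i => i.elim0, by simp⟩
    | add x y _ _ hx hy =>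
      obtain ⟨s, hs⟩ := hx
      obtain ⟨t, ht⟩ := hy
      exact ⟨_, hs.add ht⟩
    | smul r x _ hx =>
      obtain ⟨s, hs⟩ := hx
      have hr : r • x = ∑ i : Fin r.val, x := by
        rw [Finset.sum_const, Finset.card_univ, Fintype.card_fin, ← Nat.cast_smul_eq_nsmul (ZMod p),
          ZMod.natCast_zmod_val]
      rw [hr]
      generalize r.val = n
      induction n with
      | zero => exact ⟨0, fun _ => 0, fun i => i.elim0, by simp⟩
      | succ n ih =>
        obtain ⟨t, ht⟩ := ih
        exact ⟨_, by rw [Fin.sum_univ_castSucc]; exact ht.add hs⟩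
  choose s hs using key
  haveI := Fintype.ofFinite K
  exact ⟨Finset.univ.sup s, fun x => (hs x).mono h0 (Finset.le_sup (Finset.mem_univ x))⟩

lemma ww_main {K L : Type*} [Field K] [Finite K] [Field L] [Finite L] (p : ℕ) [Fact p.Prime]
    [Algebra (ZMod p) K] [Algebra (ZMod p) L] [Algebra K L] [IsScalarTower (ZMod p) K L]
    (a b c : ℕ) (ha : 0 < a) (hb : 0 < b) (hc : 0 < c)
    (hK : Module.finrank (ZMod p) K = a) (hL : Module.finrank (ZMod p) L = a * b)
    (hc1 : c ∣ p ^ a - 1)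
    (hc2 : ∀ t : ℕ, 1 ≤ t → t < a → ¬ c ∣ p ^ t - 1)
    (hbc1 : b * c ∣ p ^ (a * b) - 1)
    (hbc2 : ∀ t : ℕ, 1 ≤ t → t < a * b → ¬ (b * c) ∣ p ^ t - 1) :
    ∃ w, IsLeast {s | ∀ x : K, WWRep (WWSet ((p ^ a - 1) / c)) s x} w ∧
      IsLeast {s | ∀ x : L, WWRep (WWSet ((p ^ (a * b) - 1) / (b * c))) s x} (b * w) := by
  classical
  have : Module.Finite (ZMod p) K := Module.Finite.of_finite
  have : Module.Finite (ZMod p) L := Module.Finite.of_finite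
  have : Module.Finite K L := Module.Finite.of_finite
  have : NeZero b := ⟨hb.ne'⟩
  have : NeZero c := ⟨hc.ne'⟩
  have hbc : 0 < b * c := Nat.mul_pos hb hc
  have : NeZero (b * c) := ⟨hbc.ne'⟩
  have hcK : Nat.card K = p ^ a := by
    rw [Module.natCard_eq_pow_finrank (K := ZMod p), Nat.card_zmod, hK]
  have hcL : Nat.card L = p ^ (a * b) := by
    rw [Module.natCard_eq_pow_finrank (K := ZMod p), Nat.card_zmod, hL]
  have hKL : Module.finrank K L = b := by
    have := Module.finrank_mul_finrank (ZMod p) K L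
    rw [hK, hL] at this
    exact Nat.eq_of_mul_eq_mul_left ha this
  have memK := ww_mem hcK hc1
  have memL := ww_mem hcL hbc1
  obtain ⟨η, hη, -⟩ := ww_exists_prim hcK hc1
  obtain ⟨ζ, hζ, -⟩ := ww_exists_prim hcL hbc1
  have h0 : (0:K) ∈ WWSet ((p ^ a - 1) / c) := (memK 0).2 (Or.inl rfl)
  have hex := ww_nonempty p h0 (ww_adjoin p hK hη hc.ne' hc2)
    (fun m => (memK _).2 (Or.inr ⟨η ^ m, by rw [← pow_mul, mul_comm, pow_mul, hη.pow_eq_one, one_pow], Or.inl rfl⟩))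
  have hw : IsLeast {s | ∀ x : K, WWRep (WWSet ((p ^ a - 1) / c)) s x} (Nat.find hex) :=
    ⟨Nat.find_spec hex, fun s hs => Nat.find_min' hex hs⟩
  refine ⟨_, hw, ?_⟩
  -- the power basis
  have hfin : Module.finrank K (IntermediateField.adjoin K {ζ}) = b := by
    have htop : IntermediateField.adjoin K {ζ} = ⊤ := by
      rw [eq_top_iff]
      intro x _
      have hx : x ∈ Algebra.adjoin (ZMod p) {ζ} := by
        rw [ww_adjoin p hL hζ hbc.ne' hbc2]; trivial
      have : Algebra.adjoin (ZMod p) {ζ} ≤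
          ((IntermediateField.adjoin K {ζ}).toSubalgebra).restrictScalars (ZMod p) := by
        rw [Algebra.adjoin_le_iff]
        intro y hy
        rw [Set.mem_singleton_iff] at hy
        rw [hy, SetLike.mem_coe, Subalgebra.mem_restrictScalars, IntermediateField.mem_toSubalgebra]
        exact IntermediateField.mem_adjoin_simple_self K ζ
      have h2 := this hx
      rw [Subalgebra.mem_restrictScalars, IntermediateField.mem_toSubalgebra] at h2
      exact h2
    rw [htop, IntermediateField.finrank_top', hKL]
  rw [IntermediateField.adjoin.finrank (Algebra.IsIntegral.isIntegral ζ)] at hfin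
  have hli := linearIndependent_pow (K := K) ζ
  rw [hfin] at hli
  let B := basisOfLinearIndependentOfCardEqFinrank hli (by simp [hKL])
  have hB : ∀ (i : Fin b) (y : K), B.equivFun.symm (Pi.single i y) = algebraMap K L y * ζ ^ (i:ℕ) := by
    intro i y
    rw [Module.Basis.equivFun_symm_apply, Finset.sum_eq_single i]
    · simp [B, Algebra.smul_def]
    · intro j _ hj
      simp [hj]
    · simp
  -- theta
  obtain ⟨m, -, hm⟩ := (hη.map_of_injective (algebraMap K L).injective).eq_pow_of_pow_eq_one
    (ξ := ζ ^ b) (by rw [← pow_mul, hζ.pow_eq_one])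
  rw [← map_pow] at hm
  have hθ : ∀ q : ℕ, ((η ^ m) ^ q) ^ c = 1 := fun q => by
    rw [← pow_mul, ← pow_mul, show m * (q * c) = c * (m * q) by ring, pow_mul, hη.pow_eq_one, one_pow]
  refine ww_isLeast B.equivFun.symm.toAddEquiv _ _ h0 (fun z => ?_) hw
  rw [memL]
  have hB' : ∀ (i : Fin b) (y : K), B.equivFun.symm.toAddEquiv (Pi.single i y) = algebraMap K L y * ζ ^ (i:ℕ) := hB
  simp only [hB', memK]
  constructor
  · rintro (rfl | ⟨u, hu, h⟩)
    · exact ⟨0, 0, Or.inl rfl, by simp⟩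
    · obtain ⟨n, -, rfl⟩ := hζ.eq_pow_of_pow_eq_one hu
      have hn : ζ ^ n = algebraMap K L ((η ^ m) ^ (n / b)) * ζ ^ (n % b) := by
        rw [map_pow, hm, ← pow_mul, ← pow_add, Nat.div_add_mod]
      rcases h with h | h
      · exact ⟨⟨n % b, Nat.mod_lt _ hb⟩, _, Or.inr ⟨_, hθ (n/b), Or.inl rfl⟩, by rw [h, hn]⟩
      · exact ⟨⟨n % b, Nat.mod_lt _ hb⟩, _, Or.inr ⟨_, hθ (n/b), Or.inr rfl⟩, by
          rw [h, hn, map_neg, neg_mul]⟩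
  · rintro ⟨i, y, (rfl | ⟨u, hu, h⟩), rfl⟩
    · left; simp
    · right
      refine ⟨algebraMap K L u * ζ ^ (i:ℕ), ?_, ?_⟩
      · rw [mul_pow, ← map_pow, mul_comm b c, pow_mul u, hu, ← pow_mul, mul_comm c b, mul_comm (i:ℕ),
          pow_mul ζ, hζ.pow_eq_one]
        simp
      · rcases h with rfl | rfl
        · left; rfl
        · right; rw [map_neg, neg_mul]

lemma ww_set_eq {K : Type*} [Field K] (k : ℕ) :
    {s : ℕ | ∀ x : K, ∃ (y : Fin s → K) (ε : Fin s → K),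
          (∀ i, ε i = 1 ∨ ε i = -1) ∧ x = ∑ i, ε i * (y i) ^ k} =
    {s | ∀ x : K, WWRep (WWSet k) s x} := by
  ext s
  refine forall_congr' fun x => ⟨?_, ?_⟩
  · rintro ⟨y, ε, hε, h⟩
    exact ⟨fun i => ε i * y i ^ k, fun i => ⟨y i, ε i, hε i, rfl⟩, h⟩
  · rintro ⟨f, hf, h⟩
    choose y ε hε hy using hf
    exact ⟨y, ε, hε, by simpa only [← hy] using h⟩


theorem weak_waring_reduction_formula
    (p : ℕ) [Fact p.Prime] (a b c : ℕ)
    (ha : 0 < a) (hb : 0 < b) (hc : 0 < c)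
    (hc1 : c ∣ p ^ a - 1)
    (hc2 : ∀ t : ℕ, 1 ≤ t → t < a → ¬ c ∣ p ^ t - 1)
    (hbc1 : b * c ∣ p ^ (a * b) - 1)
    (hbc2 : ∀ t : ℕ, 1 ≤ t → t < a * b → ¬ (b * c) ∣ p ^ t - 1) :
    ∃ w₁ w₂ : ℕ,
      IsLeast {s : ℕ | ∀ x : GaloisField p a,
        ∃ (y : Fin s → GaloisField p a) (ε : Fin s → GaloisField p a),
          (∀ i, ε i = 1 ∨ ε i = -1) ∧
          x = ∑ i, ε i * (y i) ^ ((p ^ a - 1) / c)} w₁ ∧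
      IsLeast {s : ℕ | ∀ x : GaloisField p (a * b),
        ∃ (y : Fin s → GaloisField p (a * b)) (ε : Fin s → GaloisField p (a * b)),
          (∀ i, ε i = 1 ∨ ε i = -1) ∧
          x = ∑ i, ε i * (y i) ^ ((p ^ (a * b) - 1) / (b * c))} w₂ ∧
      w₂ = b * w₁ := by
  have hab : a * b ≠ 0 := (Nat.mul_pos ha hb).ne'
  have hK := GaloisField.finrank p ha.ne'
  have hL := GaloisField.finrank p hab
  obtain ⟨f⟩ := FiniteField.nonempty_algHom_of_finrank_dvd (F := ZMod p) (K := GaloisField p a)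
    (L := GaloisField p (a * b)) (by rw [hK, hL]; exact Dvd.intro _ rfl)
  letI : Algebra (GaloisField p a) (GaloisField p (a * b)) := f.toRingHom.toAlgebra
  haveI : IsScalarTower (ZMod p) (GaloisField p a) (GaloisField p (a * b)) :=
    IsScalarTower.of_algebraMap_eq fun x => (f.commutes x).symm
  obtain ⟨w, h1, h2⟩ := ww_main (K := GaloisField p a) (L := GaloisField p (a * b)) p a b c
    ha hb hc hK hL hc1 hc2 hbc1 hbc2
  refine ⟨w, b * w, ?_, ?_, rfl⟩
  · rw [ww_set_eq]; exact h1
  · rw [ww_set_eq]; exact h2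
end
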